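/- arXiv:1905.02083 — 2 statements merged into one kernel-verified Lean document; each statement's English description precedes it below -/
import Mathlib

section
/- For every n ≥ 1, R_n(x,y,z,t) = Σ_{T ∈ G_{n+1}} y^{unl(T)} t^{impp(T)} x^{deg_T(1)-1} z^{lead(T)-deg_T(1)-1}, where the sum is over all Greg trees of size n+1 rooted at 1. -/
noncomputable section

open MvPolynomial Function

/-! ### The polynomial sequences -/

/-- The generalized Ramanujan polynomials `Q n`, in the variables
`x = X 0`, `y = X 1`, `z = X 2`, `t = X 3`:
`Q 1 = 1` and `Q (n+1) = (x + n z + n (y+t)) Q n + (y+t) y ∂_y (Q n)` for `n ≥ 1`. -/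
def Qpoly : ℕ → MvPolynomial (Fin 4) ℚ
  | 0 => 1
  | 1 => 1
  | n + 2 =>
      (X 0 + C ((n : ℚ) + 1) * X 2 + C ((n : ℚ) + 1) * (X 1 + X 3)) * Qpoly (n + 1)
        + (X 1 + X 3) * (X 1 * pderiv 1 (Qpoly (n + 1)))

/-- `R n (x,y,z,t) = Q n (x, y+1, z, t-1)`. -/
def Rpoly (n : ℕ) : MvPolynomial (Fin 4) ℚ :=
  bind₁ (fun i : Fin 4 => if i = 1 then X 1 + 1 else if i = 3 then X 3 - 1 else X i) (Qpoly n)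

/-- `H 1 = 1` and `H (n+1) = (2n-1+(n+1)y) H n + (1+y)^2 H n'` for `n ≥ 1`. -/
def Hpoly : ℕ → Polynomial ℚ
  | 0 => 1
  | 1 => 1
  | n + 2 =>
      (Polynomial.C (2 * (n : ℚ) + 1) + Polynomial.C ((n : ℚ) + 2) * Polynomial.X)
          * Hpoly (n + 1)
        + (1 + Polynomial.X) ^ 2 * Polynomial.derivative (Hpoly (n + 1))

/-- The Ramanujan polynomials, in the variables `x = X 0`, `y = X 1`:
`P 1 = 1` and `P (n+1) = (x + n + n y) P n + y^2 ∂_y (P n)` for `n ≥ 1`. -/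
def Ppoly : ℕ → MvPolynomial (Fin 2) ℚ
  | 0 => 1
  | 1 => 1
  | n + 2 =>
      (X 0 + C ((n : ℚ) + 1) * (1 + X 1)) * Ppoly (n + 1)
        + X 1 ^ 2 * pderiv 1 (Ppoly (n + 1))

/-- `C 1 = 1` and `C (n+1) = n (1+y) C n + y^2 C n'` for `n ≥ 1`. -/
def Cpoly : ℕ → Polynomial ℚ
  | 0 => 1
  | 1 => 1
  | n + 2 =>
      Polynomial.C ((n : ℚ) + 1) * (1 + Polynomial.X) * Cpoly (n + 1)
        + Polynomial.X ^ 2 * Polynomial.derivative (Cpoly (n + 1))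

/-! ### Cayley trees

A Cayley tree of size `n`, rooted at the vertex with label `1`, is encoded by its parent
function on `Fin n` (vertex `v` carries label `v+1`; the root is the vertex with value `0`).
The root is a fixed point and every vertex reaches the root by iterating the parent map. -/

def CayleyTree (n : ℕ) : Type :=
  {p : Fin n → Fin n //
    (∀ v, v.val = 0 → p v = v) ∧ ∀ v : Fin n, ∃ k, k < n ∧ (p^[k] v).val = 0}

noncomputable instance (n : ℕ) : Fintype (CayleyTree n) := by
  unfold CayleyTree; exact Fintype.ofFinite _

namespace CayleyTree

variable {n : ℕ} (T : CayleyTree n)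

/-- `Desc T v a` : `v` is a descendant of `a` (including `a` itself). -/
def Desc (v a : Fin n) : Prop := ∃ k, T.1^[k] v = a

/-- `β_T(a)` : the smallest label among the descendants of `a`, as a 0-based index. -/
def beta (a : Fin n) : ℕ := sInf {j : ℕ | ∃ v : Fin n, v.val = j ∧ T.Desc v a}

/-- The edge from `c` to its parent is improper: `λ(parent c) > β(c)`. -/
def ImproperEdge (c : Fin n) : Prop := c.val ≠ 0 ∧ T.beta c < (T.1 c).val

/-- The number of improper edges. -/
def impe : ℕ := {c : Fin n | T.ImproperEdge c}.ncard

/-- `a` is an improper parent, i.e. `β_T(a) ≠ λ_T(a)`. -/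
def ImproperParent (a : Fin n) : Prop := T.beta a ≠ a.val

/-- The number of improper parents. -/
def impp : ℕ := {a : Fin n | T.ImproperParent a}.ncard

/-- The degree of the root (= its number of children). -/
def degRoot : ℕ := {c : Fin n | c.val ≠ 0 ∧ (T.1 c).val = 0}.ncard

/-- The length of the greater ancestors path of `i` : the largest `k` such that all the
ancestors `p^[l] i`, `l ≤ k`, have a label `≥ λ(i)`. -/
def bapLen (i : Fin n) : ℕ := Nat.findGreatest (fun k => ∀ l ≤ k, i ≤ T.1^[l] i) n

/-- `i` is a leading vertex: `β_T(a_p) = λ_T(i)` where `a_p` is the top of the greater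
ancestors path of `i`. -/
def Leading (i : Fin n) : Prop := T.beta (T.1^[T.bapLen i] i) = i.val

/-- The number of leading vertices. -/
def lead : ℕ := {i : Fin n | T.Leading i}.ncard

end CayleyTree

/-! ### Greg trees

A Greg tree of size `n`, rooted at the vertex with label `1`, has labelled vertices `Fin n`
(vertex `Sum.inl v` carries label `v+1`) and unlabelled vertices `Fin m`, each of degree at
least `3`.  It is encoded by its parent function.  To make the encoding canonical, the
unlabelled vertices are required to be indexed in increasing order of the pair
`(β, depth)` (this pair is distinct for distinct unlabelled vertices, so every abstract Greg
tree admits exactly one such encoding). -/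

/-- The root: the labelled vertex with label `1` (value `0`). -/
def gregRoot {n m : ℕ} (v : Fin n ⊕ Fin m) : Prop := ∃ w : Fin n, w.val = 0 ∧ v = Sum.inl w

namespace GregRaw

variable {n m : ℕ} (p : Fin n ⊕ Fin m → Fin n ⊕ Fin m)

/-- `v` is a descendant of `a` (including `a` itself). -/
def Desc (v a : Fin n ⊕ Fin m) : Prop := ∃ k, p^[k] v = a

/-- `β(a)` : smallest label among the descendants of `a`, as a 0-based index. -/
def beta (a : Fin n ⊕ Fin m) : ℕ :=
  sInf {j : ℕ | ∃ w : Fin n, w.val = j ∧ Desc p (Sum.inl w) a}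

/-- Distance from `v` to the root. -/
def depth (v : Fin n ⊕ Fin m) : ℕ := sInf {k : ℕ | gregRoot (p^[k] v)}

/-- Sorting key for unlabelled vertices: the pair `(β, depth)` encoded as a number. -/
def key (u : Fin m) : ℕ := beta p (Sum.inr u) * (n + m + 1) + depth p (Sum.inr u)

/-- The set of children of a vertex. -/
def children (a : Fin n ⊕ Fin m) : Set (Fin n ⊕ Fin m) := {w | w ≠ a ∧ p w = a}

end GregRaw

/-- The conditions making a parent function on `Fin n ⊕ Fin m` a (canonically encoded)
Greg tree: the root is a fixed point, every vertex reaches the root, every unlabelled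
vertex has at least two children (hence, having also a parent, degree at least `3`),
and unlabelled vertices are indexed in increasing order of `(β, depth)`. -/
def GregCond (n m : ℕ) (p : Fin n ⊕ Fin m → Fin n ⊕ Fin m) : Prop :=
  (∀ v, gregRoot v → p v = v) ∧
  (∀ v, ∃ k, k < n + m ∧ gregRoot (p^[k] v)) ∧
  (∀ u : Fin m, 2 ≤ (GregRaw.children p (Sum.inr u)).ncard) ∧
  (∀ u w : Fin m, u < w ↔ GregRaw.key p u < GregRaw.key p w)

/-- Greg trees of size `n` rooted at `1`.  (The number of unlabelled vertices of a Greg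
tree with `n` labelled vertices is always at most `n`, so the bound `m ≤ n` does not
exclude any Greg tree.) -/
def GregTree (n : ℕ) : Type :=
  Σ m : Fin (n + 1), {p : Fin n ⊕ Fin m.val → Fin n ⊕ Fin m.val // GregCond n m.val p}

noncomputable instance (n : ℕ) : Fintype (GregTree n) := by
  unfold GregTree; exact Fintype.ofFinite _

namespace GregTree

variable {n : ℕ} (T : GregTree n)

/-- The number of unlabelled vertices. -/
def unl : ℕ := T.1.val

/-- `β_T`. -/
def beta (a : Fin n ⊕ Fin T.1.val) : ℕ := GregRaw.beta T.2.1 a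

/-- The labelled vertex `a` is an improper parent, i.e. `β_T(a) ≠ λ_T(a)`. -/
def ImproperParent (a : Fin n) : Prop := T.beta (Sum.inl a) ≠ a.val

/-- The number of improper parents. -/
def impp : ℕ := {a : Fin n | T.ImproperParent a}.ncard

/-- The degree of the root (= its number of children). -/
def degRoot : ℕ :=
  {w : Fin n ⊕ Fin T.1.val | ¬gregRoot w ∧ gregRoot (T.2.1 w)}.ncard

/-- The length of the greater ancestors path of the labelled vertex `i` : the largest `k`
such that all labelled vertices among the ancestors `p^[l] (inl i)`, `l ≤ k`, have a label
`≥ λ(i)`. -/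
def bapLen (i : Fin n) : ℕ :=
  Nat.findGreatest
    (fun k => ∀ l ≤ k, ∀ j : Fin n, T.2.1^[l] (Sum.inl i) = Sum.inl j → i ≤ j)
    (n + T.1.val)

/-- The labelled vertex `i` is a leading vertex. -/
def Leading (i : Fin n) : Prop := T.beta (T.2.1^[T.bapLen i] (Sum.inl i)) = i.val

/-- The number of leading vertices. -/
def lead : ℕ := {i : Fin n | T.Leading i}.ncard

end GregTree

/-! ### Planar trees

A planar tree of size `n` rooted at `1` is encoded by a parent function together with a
rank function giving each non-root vertex its position (from the left, starting at `0`)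
among the children of its parent; ranks of the children of a fixed vertex form an initial
segment of `ℕ`, so the encoding is canonical. -/

def PlanarTree (n : ℕ) : Type :=
  {pr : (Fin n → Fin n) × (Fin n → Fin n) //
    (∀ v, v.val = 0 → pr.1 v = v) ∧
    (∀ v : Fin n, ∃ k, k < n ∧ (pr.1^[k] v).val = 0) ∧
    (∀ v, v.val = 0 → (pr.2 v).val = 0) ∧
    (∀ c d, c.val ≠ 0 → d.val ≠ 0 → pr.1 c = pr.1 d → pr.2 c = pr.2 d → c = d) ∧
    (∀ c, c.val ≠ 0 → ∀ s : Fin n, s < pr.2 c →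
      ∃ d, d.val ≠ 0 ∧ pr.1 d = pr.1 c ∧ pr.2 d = s)}

noncomputable instance (n : ℕ) : Fintype (PlanarTree n) := by
  unfold PlanarTree; exact Fintype.ofFinite _

namespace PlanarTree

variable {n : ℕ} (T : PlanarTree n)

/-- `β_T(a)` : the smallest label among the descendants of `a`, as a 0-based index. -/
def beta (a : Fin n) : ℕ := sInf {j : ℕ | ∃ v : Fin n, v.val = j ∧ ∃ k, T.1.1^[k] v = a}

/-- `j` is elder: it has a brother to its right with a smaller `β`. -/
def Elder (j : Fin n) : Prop :=
  j.val ≠ 0 ∧ ∃ k : Fin n, k.val ≠ 0 ∧ T.1.1 k = T.1.1 j ∧ T.1.2 j < T.1.2 k ∧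
    T.beta k < T.beta j

/-- The number of elder vertices. -/
def eld : ℕ := {j : Fin n | T.Elder j}.ncard

/-- The edge from `c` to its parent is improper: `c` is a younger child and
`λ(parent c) > β(c)`. -/
def ImproperEdge (c : Fin n) : Prop := c.val ≠ 0 ∧ ¬T.Elder c ∧ T.beta c < (T.1.1 c).val

/-- The number of improper edges. -/
def impe : ℕ := {c : Fin n | T.ImproperEdge c}.ncard

/-- `young_T(i)` : the number of younger children of `i`. -/
def young (i : Fin n) : ℕ := {c : Fin n | c.val ≠ 0 ∧ T.1.1 c = i ∧ ¬T.Elder c}.ncard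

/-- `young_T(1)` : the number of younger children of the root. -/
def youngRoot : ℕ := {c : Fin n | c.val ≠ 0 ∧ (T.1.1 c).val = 0 ∧ ¬T.Elder c}.ncard

end PlanarTree


namespace GregAux
open Finset

/-- Laminar, point separating families encoding Greg trees rooted at `0` with labels in `range n`. -/
structure LF (n : ℕ) (F : Finset (Finset ℕ)) : Prop where
  sub : ∀ S ∈ F, S ⊆ range n
  ne : ∀ S ∈ F, S.Nonempty
  top : range n ∈ F
  root : ∀ S ∈ F, 0 ∈ S → S = range n
  lam : ∀ S ∈ F, ∀ T ∈ F, ∀ i ∈ S, i ∈ T → S ⊆ T ∨ T ⊆ S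
  sep : ∀ i < n, ∀ j < n, (∀ S ∈ F, i ∈ S ↔ j ∈ S) → i = j

/-- The set `S` is the descendant set of a labelled vertex. -/
def Lab (F : Finset (Finset ℕ)) (S : Finset ℕ) : Prop := ∃ i ∈ S, ∀ T ∈ F, i ∈ T → S ⊆ T

/-- Insertion of the label `N`. -/
def build (N : ℕ) (F : Finset (Finset ℕ)) (S : Finset ℕ) (a b : Bool) : Finset (Finset ℕ) :=
  (F.image fun T => if S ⊆ T then insert N T else T) ∪ (if a then {S} else ∅) ∪
    (if b then {{N}} else ∅)

/-- Deletion of the label `N`. -/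
def del (N : ℕ) (F : Finset (Finset ℕ)) : Finset (Finset ℕ) := (F.image fun T => T.erase N).erase ∅

/-- Admissible insertions. -/
def Allowed (N : ℕ) (F : Finset (Finset ℕ)) (S : Finset ℕ) (a b : Bool) : Prop :=
  S ∈ F ∧ (a = true → S ≠ range N) ∧ (a = true ∨ b = true ∨ ¬ Lab F S)

theorem mem_build {N : ℕ} {F : Finset (Finset ℕ)} {S : Finset ℕ} {a b : Bool} {U : Finset ℕ} :
    U ∈ build N F S a b ↔ (∃ T ∈ F, S ⊆ T ∧ U = insert N T) ∨ (U ∈ F ∧ ¬ S ⊆ U) ∨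
      (a = true ∧ U = S) ∨ (b = true ∧ U = {N}) := by
  unfold build
  simp only [mem_union, mem_image]
  constructor
  · rintro ((⟨T, hT, rfl⟩ | h) | h)
    · by_cases hS : S ⊆ T
      · left; exact ⟨T, hT, hS, by simp [hS]⟩
      · right; left; simp [hS, hT]
    · cases a <;> simp_all
    · cases b <;> simp_all
  · rintro (⟨T, hT, hS, rfl⟩ | ⟨h, hS⟩ | ⟨rfl, rfl⟩ | ⟨rfl, rfl⟩)
    · left; left; exact ⟨T, hT, by simp [hS]⟩
    · left; left; exact ⟨U, h, by simp [hS]⟩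
    · simp
    · simp

theorem mem_del {N : ℕ} {F : Finset (Finset ℕ)} {U : Finset ℕ} :
    U ∈ del N F ↔ U.Nonempty ∧ ∃ T ∈ F, T.erase N = U := by
  unfold del
  simp [nonempty_iff_ne_empty]

theorem LF.notMem {N : ℕ} {F : Finset (Finset ℕ)} (h : LF N F) {S : Finset ℕ} (hS : S ∈ F) :
    N ∉ S := fun hN => by simpa using h.sub S hS hN

theorem LF.build {N : ℕ} (hN : 1 ≤ N) {F : Finset (Finset ℕ)} (h : LF N F) {S : Finset ℕ}
    {a b : Bool} (hA : Allowed N F S a b) : LF (N+1) (build N F S a b) := by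
  obtain ⟨hS, ha, hab⟩ := hA
  have hNS := h.notMem hS
  have hin : ∀ T ∈ F, S ⊆ T → insert N T ∈ GregAux.build N F S a b := fun T hT hST =>
    mem_build.2 (Or.inl ⟨T, hT, hST, rfl⟩)
  have hsu := h.sub
  constructor
  · intro U hU
    rw [mem_build] at hU
    rcases hU with ⟨T, hT, hST, rfl⟩ | ⟨hU, hS'⟩ | ⟨_, rfl⟩ | ⟨_, rfl⟩
    · intro i hi
      have := h.sub T hT
      simp only [mem_insert] at hi
      rcases hi with rfl | hi
      · simp
      · have := this hi
        simp at this ⊢; omega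
    · exact (h.sub U hU).trans (by simp)
    · exact (h.sub U hS).trans (by simp)
    · simp
  · intro U hU
    rw [mem_build] at hU
    rcases hU with ⟨T, hT, hST, rfl⟩ | ⟨hU, hS'⟩ | ⟨_, rfl⟩ | ⟨_, rfl⟩
    · simp
    · exact h.ne U hU
    · exact h.ne U hS
    · simp
  · rw [range_add_one]
    exact hin _ h.top (h.sub S hS)
  · intro U hU h0
    rw [mem_build] at hU
    rcases hU with ⟨T, hT, hST, rfl⟩ | ⟨hU, hS'⟩ | ⟨ha', rfl⟩ | ⟨_, rfl⟩
    · rw [range_add_one, h.root T hT]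
      simp only [mem_insert] at h0
      rcases h0 with rfl | h0
      · omega
      · exact h0
    · have := h.root U hU h0
      subst this
      exact absurd (h.sub S hS) hS'
    · exact absurd (h.root U hS h0) (ha ha')
    · simp at h0; omega
  · intro U hU V hV i hiU hiV
    have hn := fun T hT => h.notMem (S := T) hT
    have key := h.lam
    have key2 := h.ne
    rw [mem_build] at hU hV
    rcases hU with ⟨T, hT, hST, rfl⟩ | ⟨hU, hS'⟩ | ⟨ha', rfl⟩ | ⟨_, rfl⟩ <;>
    rcases hV with ⟨T', hT', hST', rfl⟩ | ⟨hV, hS''⟩ | ⟨ha'', rfl⟩ | ⟨_, rfl⟩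
    · obtain ⟨s, hs⟩ := key2 S hS
      rcases key T hT T' hT' s (hST hs) (hST' hs) with h1 | h1
      · left; exact insert_subset_insert _ h1
      · right; exact insert_subset_insert _ h1
    · have hiT : i ∈ T := by
        rcases mem_insert.1 hiU with rfl | h1
        · exact absurd hiV (hn _ hV)
        · exact h1
      rcases key T hT V hV i hiT hiV with h1 | h1
      · exact absurd (hST.trans h1) hS''
      · right; exact h1.trans (subset_insert _ _)
    · right; exact hST.trans (subset_insert _ _)
    · right; simp
    · have hiT : i ∈ T' := by
        rcases mem_insert.1 hiV with rfl | h1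
        · exact absurd hiU (hn _ hU)
        · exact h1
      rcases key T' hT' U hU i hiT hiU with h1 | h1
      · exact absurd (hST'.trans h1) hS'
      · left; exact h1.trans (subset_insert _ _)
    · exact key U hU V hV i hiU hiV
    · exact key U hU V hS i hiU hiV
    · simp at hiV; subst hiV; exact absurd hiU (hn _ hU)
    · left; exact hST'.trans (subset_insert _ _)
    · exact key U hS V hV i hiU hiV
    · left; exact Subset.rfl
    · simp at hiV; subst hiV; exact absurd hiU (hn _ hS)
    · left; simp
    · simp at hiU; subst hiU; exact absurd hiV (hn _ hV)
    · simp at hiU; subst hiU; exact absurd hiV (hn _ hS)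
    · left; exact Subset.rfl
  · -- separation of old points
    have hold : ∀ i < N, ∀ j < N, (∀ S_1 ∈ GregAux.build N F S a b, i ∈ S_1 ↔ j ∈ S_1) → i = j := by
      intro i hi j hj hij
      apply h.sep i hi j hj
      intro T hT
      by_cases hST : S ⊆ T
      · have := hij _ (hin T hT hST)
        simp only [mem_insert] at this
        have e1 : i ≠ N := by omega
        have e2 : j ≠ N := by omega
        simpa [e1, e2] using this
      · exact hij T (mem_build.2 (Or.inr (Or.inl ⟨hT, hST⟩)))
    have hnew : ∀ i < N, ¬ (∀ S_1 ∈ GregAux.build N F S a b, i ∈ S_1 ↔ N ∈ S_1) := by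
      intro i hi hij
      have hiS : i ∈ S := by
        have := (hij _ (hin S hS Subset.rfl)).2 (by simp)
        rcases mem_insert.1 this with h1 | h1
        · omega
        · exact h1
      rcases hab with h1 | h1 | h1
      · exact hNS ((hij S (mem_build.2 (by simp [h1]))).1 hiS)
      · have := (hij {N} (mem_build.2 (by simp [h1]))).2 (by simp)
        simp at this; omega
      · apply h1
        refine ⟨i, hiS, fun T hT hiT => ?_⟩
        by_contra hST
        exact h.notMem hT ((hij T (mem_build.2 (by simp [hT, hST]))).1 hiT)
    intro i hi j hj hij
    rcases Nat.lt_or_ge i N with hi' | hi' <;> rcases Nat.lt_or_ge j N with hj' | hj'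
    · exact hold i hi' j hj' hij
    · obtain rfl : j = N := by omega
      exact absurd hij (hnew i hi')
    · obtain rfl : i = N := by omega
      exact absurd (fun T hT => (hij T hT).symm) (hnew j hj')
    · omega

theorem del_build {N : ℕ} {F : Finset (Finset ℕ)} (h : LF N F) {S : Finset ℕ}
    {a b : Bool} (hS : S ∈ F) : del N (build N F S a b) = F := by
  ext U
  rw [mem_del]
  constructor
  · rintro ⟨hne, T, hT, rfl⟩
    rw [mem_build] at hT
    rcases hT with ⟨T, hT, hST, rfl⟩ | ⟨hU, hS'⟩ | ⟨ha', rfl⟩ | ⟨_, rfl⟩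
    · rwa [erase_insert (h.notMem hT)]
    · rwa [erase_eq_of_notMem (h.notMem hU)]
    · rwa [erase_eq_of_notMem (h.notMem hS)]
    · simp at hne
  · intro hU
    refine ⟨h.ne U hU, ?_⟩
    by_cases hSU : S ⊆ U
    · exact ⟨insert N U, mem_build.2 (Or.inl ⟨U, hU, hSU, rfl⟩), erase_insert (h.notMem hU)⟩
    · exact ⟨U, mem_build.2 (by simp [hU, hSU]), erase_eq_of_notMem (h.notMem hU)⟩

theorem mem_build_insert {N : ℕ} {F : Finset (Finset ℕ)} (h : LF N F) {S : Finset ℕ}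
    {a b : Bool} (hS : S ∈ F) {T : Finset ℕ} (hT : T ∈ F) :
    insert N T ∈ build N F S a b ↔ S ⊆ T := by
  rw [mem_build]
  constructor
  · rintro (⟨T', hT', hST, e⟩ | ⟨hU, hS'⟩ | ⟨ha', e⟩ | ⟨_, e⟩)
    · have := congrArg (fun X => X.erase N) e
      simp only [erase_insert (h.notMem hT), erase_insert (h.notMem hT')] at this
      rwa [this]
    · exact absurd (mem_insert_self N T) (h.notMem hU)
    · exact absurd (e ▸ mem_insert_self N T) (h.notMem hS)
    · have := congrArg (fun X => X.erase N) e
      simp only [erase_insert (h.notMem hT)] at this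
      have h2 := h.ne T hT
      simp [this] at h2
  · intro hST; exact Or.inl ⟨T, hT, hST, rfl⟩

theorem mem_build_singleton {N : ℕ} {F : Finset (Finset ℕ)} (h : LF N F) {S : Finset ℕ}
    {a b : Bool} (hS : S ∈ F) : {N} ∈ build N F S a b ↔ b = true := by
  rw [mem_build]
  constructor
  · rintro (⟨T', hT', hST, e⟩ | ⟨hU, hS'⟩ | ⟨ha', e⟩ | ⟨hb, e⟩)
    · have := congrArg (fun X => X.erase N) e
      simp only [erase_insert (h.notMem hT')] at this
      have h2 := h.ne T' hT'
      simp [← this] at h2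
    · exact absurd (mem_singleton_self N) (h.notMem hU)
    · exact absurd (e ▸ mem_singleton_self N) (h.notMem hS)
    · exact hb
  · intro hb; simp [hb]

theorem mem_build_self {N : ℕ} {F : Finset (Finset ℕ)} (h : LF N F) {S : Finset ℕ}
    {a b : Bool} (hS : S ∈ F) : S ∈ build N F S a b ↔ a = true := by
  have hN := h.notMem hS
  rw [mem_build]
  constructor
  · rintro (⟨T', hT', hST, e⟩ | ⟨hU, hS'⟩ | ⟨ha', e⟩ | ⟨hb, e⟩)
    · exact absurd (e ▸ mem_insert_self N T') hN
    · exact absurd Subset.rfl hS'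
    · exact ha'
    · exact absurd (e ▸ mem_singleton_self N) hN
  · intro hb; simp [hb]

theorem build_inj {N : ℕ} {F : Finset (Finset ℕ)} (h : LF N F) {S S' : Finset ℕ}
    {a b a' b' : Bool} (hS : S ∈ F) (hS' : S' ∈ F) (e : build N F S a b = build N F S' a' b') :
    S = S' ∧ a = a' ∧ b = b' := by
  have e1 : S = S' := by
    apply Subset.antisymm
    · rw [← mem_build_insert h hS (a := a) (b := b) hS', e, mem_build_insert h hS' hS']
    · rw [← mem_build_insert h hS' (a := a') (b := b') hS, ← e, mem_build_insert h hS hS]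
  subst e1
  refine ⟨rfl, ?_, ?_⟩
  · rw [Bool.eq_iff_iff, ← mem_build_self h hS (b := b), e, mem_build_self h hS]
  · rw [Bool.eq_iff_iff, ← mem_build_singleton h hS (a := a), e, mem_build_singleton h hS]

theorem LF.del {N : ℕ} (hN : 1 ≤ N) {F : Finset (Finset ℕ)} (h : LF (N+1) F) :
    LF N (del N F) := by
  constructor
  · intro U hU
    obtain ⟨_, T, hT, rfl⟩ := mem_del.1 hU
    intro i hi
    have := h.sub T hT (mem_of_mem_erase hi)
    have h2 := ne_of_mem_erase hi
    simp at this ⊢; omega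
  · intro U hU
    exact (mem_del.1 hU).1
  · refine mem_del.2 ⟨⟨0, by simp; omega⟩, range (N+1), h.top, by simp [range_add_one]⟩
  · intro U hU h0
    obtain ⟨_, T, hT, rfl⟩ := mem_del.1 hU
    rw [h.root T hT (mem_of_mem_erase h0)]
    simp [range_add_one]
  · intro U hU V hV i hiU hiV
    obtain ⟨_, T, hT, rfl⟩ := mem_del.1 hU
    obtain ⟨_, T', hT', rfl⟩ := mem_del.1 hV
    rcases h.lam T hT T' hT' i (mem_of_mem_erase hiU) (mem_of_mem_erase hiV) with h1 | h1
    · left; exact erase_subset_erase _ h1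
    · right; exact erase_subset_erase _ h1
  · intro i hi j hj hij
    apply h.sep i (by omega) j (by omega)
    intro T hT
    have e1 : i ≠ N := by omega
    have e2 : j ≠ N := by omega
    by_cases hne : (T.erase N).Nonempty
    · simpa [e1, e2] using hij _ (mem_del.2 ⟨hne, T, hT, rfl⟩)
    · rw [not_nonempty_iff_eq_empty] at hne
      have h1 : i ∉ T.erase N := by simp [hne]
      have h2 : j ∉ T.erase N := by simp [hne]
      simp [e1] at h1
      simp [e2] at h2
      simp [h1, h2]

theorem LF.exists_build {N : ℕ} (hN : 1 ≤ N) {F : Finset (Finset ℕ)} (h : LF (N+1) F) :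
    ∃ S a b, Allowed N (GregAux.del N F) S a b ∧ F = GregAux.build N (GregAux.del N F) S a b := by
  classical
  have hd := h.del hN
  obtain ⟨S', hS'm, hmin⟩ := (F.filter fun T => N ∈ T ∧ T ≠ {N}).exists_min_image card
    ⟨range (N+1), by
      simp only [mem_filter, h.top, mem_range, lt_add_iff_pos_right, zero_lt_one, true_and]
      intro e
      have : (0:ℕ) ∈ range (N+1) := by simp
      rw [e] at this
      simp at this; omega⟩
  simp only [mem_filter] at hS'm hmin
  obtain ⟨hS'F, hNS', hS'ne⟩ := hS'm
  have hmin' : ∀ T ∈ F, N ∈ T → T ≠ {N} → S' ⊆ T := by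
    intro T hT hNT hne
    rcases h.lam S' hS'F T hT N hNS' hNT with h1 | h1
    · exact h1
    · rw [eq_of_subset_of_card_le h1 (hmin T ⟨hT, hNT, hne⟩)]
  set S := S'.erase N with hSdef
  have hSS' : insert N S = S' := insert_erase hNS'
  have hSne : S.Nonempty := by
    rw [nonempty_iff_ne_empty]
    intro e
    apply hS'ne
    rw [← hSS', e]; rfl
  have hSd : S ∈ GregAux.del N F := mem_del.2 ⟨hSne, S', hS'F, rfl⟩
  have hNS : N ∉ S := by simp [hSdef]
  -- members of `F` in terms of the chain
  have hch : ∀ T ∈ F, N ∉ T → S ⊆ T → T = S := by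
    intro T hT hNT hST
    obtain ⟨s, hs⟩ := hSne
    rcases h.lam S' hS'F T hT s (mem_of_mem_erase hs) (hST hs) with h1 | h1
    · exact absurd (h1 hNS') hNT
    · apply Subset.antisymm _ hST
      intro i hi
      rw [hSdef, mem_erase]
      exact ⟨fun e => hNT (e ▸ hi), h1 hi⟩
  refine ⟨S, decide (S ∈ F), decide ({N} ∈ F), ⟨hSd, ?_, ?_⟩, ?_⟩
  · intro hSF e
    simp only [decide_eq_true_eq] at hSF
    have := h.root S hSF (by rw [e]; simp; omega)
    rw [e] at this
    have := congrArg card this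
    simp at this
  · by_contra hcon
    simp only [decide_eq_true_eq, not_or, not_not] at hcon
    obtain ⟨h1, h2, i, hiS, hi⟩ := hcon
    have hiN : i ≠ N := fun e => hNS (e ▸ hiS)
    apply hiN
    have hiN2 := hd.sub S hSd hiS
    simp at hiN2
    apply h.sep i (by omega) N (by omega)
    intro T hT
    constructor
    · intro hiT
      by_contra hNT
      have hTd : T ∈ GregAux.del N F := mem_del.2 ⟨⟨i, hiT⟩, T, hT, erase_eq_of_notMem hNT⟩
      have := hch T hT hNT (hi T hTd hiT)
      exact h1 (this ▸ hT)
    · intro hNT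
      exact hmin' T hT hNT (fun e => h2 (e ▸ hT)) (mem_of_mem_erase hiS)
  · ext U
    rw [mem_build]
    simp only [decide_eq_true_eq]
    constructor
    · intro hU
      by_cases hNU : N ∈ U
      · by_cases hU1 : U = {N}
        · right; right; right; exact ⟨hU1 ▸ hU, hU1⟩
        · left
          have hsub := hmin' U hU hNU hU1
          refine ⟨U.erase N, mem_del.2 ⟨hSne.mono (erase_subset_erase _ hsub), U, hU, rfl⟩,
            erase_subset_erase _ hsub, (insert_erase hNU).symm⟩
      · by_cases hSU : S ⊆ U
        · have := hch U hU hNU hSU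
          right; right; left; exact ⟨this ▸ hU, this⟩
        · right; left
          exact ⟨mem_del.2 ⟨h.ne U hU, U, hU, erase_eq_of_notMem hNU⟩, hSU⟩
    · rintro (⟨T, hT, hST, rfl⟩ | ⟨hU, hSU⟩ | ⟨h1, rfl⟩ | ⟨h1, rfl⟩)
      · obtain ⟨hne, T', hT', rfl⟩ := mem_del.1 hT
        by_cases hNT : N ∈ T'
        · rwa [insert_erase hNT]
        · rw [erase_eq_of_notMem hNT] at hST ⊢
          rw [hch T' hT' hNT hST, hSS']
          exact hS'F
      · obtain ⟨hne, T', hT', rfl⟩ := mem_del.1 hU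
        by_cases hNT : N ∈ T'
        · exfalso
          apply hSU
          apply erase_subset_erase
          apply hmin' T' hT' hNT
          rintro rfl
          simp at hne
        · rwa [erase_eq_of_notMem hNT]
      · exact h1
      · exact h1

theorem LF.exists_min {N : ℕ} {F : Finset (Finset ℕ)} (h : LF N F) {i : ℕ} (hi : i < N) :
    ∃ S ∈ F, i ∈ S ∧ ∀ T ∈ F, i ∈ T → S ⊆ T := by
  classical
  obtain ⟨S, hS, hmin⟩ := (F.filter fun T => i ∈ T).exists_min_image card
    ⟨range N, by simp [h.top, hi]⟩
  simp only [mem_filter] at hS hmin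
  refine ⟨S, hS.1, hS.2, fun T hT hiT => ?_⟩
  rcases h.lam S hS.1 T hT i hS.2 hiT with h1 | h1
  · exact h1
  · rw [eq_of_subset_of_card_le h1 (hmin T ⟨hT, hiT⟩)]

open Classical in
theorem LF.card_lab {N : ℕ} {F : Finset (Finset ℕ)} (h : LF N F) : (F.filter (Lab F)).card = N := by
  choose! D hD using fun i (hi : i < N) => h.exists_min hi
  have : F.filter (Lab F) = (range N).image D := by
    ext S
    simp only [mem_filter, mem_image, mem_range]
    constructor
    · rintro ⟨hS, i, hiS, hi⟩
      have hiN : i < N := by simpa using h.sub S hS hiS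
      obtain ⟨h1, h2, h3⟩ := hD i hiN
      exact ⟨i, hiN, Subset.antisymm (h3 S hS hiS) (hi _ h1 h2)⟩
    · rintro ⟨i, hi, rfl⟩
      obtain ⟨h1, h2, h3⟩ := hD i hi
      exact ⟨h1, i, h2, h3⟩
  rw [this, card_image_of_injOn, card_range]
  intro i hi j hj hij
  simp only [coe_range, Set.mem_Iio] at hi hj
  obtain ⟨h1, h2, h3⟩ := hD i hi
  obtain ⟨g1, g2, g3⟩ := hD j hj
  apply h.sep i hi j hj
  intro S hS
  exact ⟨fun hh => h3 S hS hh (hij ▸ g2), fun hh => g3 S hS hh (hij ▸ h2)⟩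

theorem LF.lab_top {N : ℕ} (hN : 1 ≤ N) {F : Finset (Finset ℕ)} (h : LF N F) : Lab F (range N) :=
  ⟨0, by simp; omega, fun T hT h0 => (h.root T hT h0).symm ▸ Subset.rfl⟩

/-! statistics -/

/-- number of improper parents -/
def fimpp (N : ℕ) (F : Finset (Finset ℕ)) : ℕ :=
  ((range N).filter fun i => ∃ j ∈ range i, ∀ S ∈ F, i ∈ S → j ∈ S).card

/-- leading labels -/
def FLead (F : Finset (Finset ℕ)) (i : ℕ) : Prop :=
  ∀ S ∈ F, i ∈ S → (∃ k ∈ S, k < i) → ∃ j ∈ S, j < i ∧ ∀ T ∈ F, j ∈ T → i ∈ T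

instance (F : Finset (Finset ℕ)) : DecidablePred (FLead F) := fun i => by
  unfold FLead; infer_instance

/-- number of leading labels -/
def flead (N : ℕ) (F : Finset (Finset ℕ)) : ℕ := ((range N).filter (FLead F)).card

/-- degree of the root -/
def fdeg (N : ℕ) (F : Finset (Finset ℕ)) : ℕ :=
  (F.filter fun S => S ≠ range N ∧ ∀ T ∈ F, S ⊆ T → T = S ∨ T = range N).card

theorem card_build {N : ℕ} {F : Finset (Finset ℕ)} (h : LF N F) {S : Finset ℕ}
    {a b : Bool} (hS : S ∈ F) : (build N F S a b).card = F.card + a.toNat + b.toNat := by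
  have h1 : (F.image fun T => if S ⊆ T then insert N T else T).card = F.card := by
    apply card_image_of_injOn
    intro T hT T' hT' e
    have := congrArg (fun X => X.erase N) e
    have n1 := h.notMem hT
    have n2 := h.notMem hT'
    by_cases c1 : S ⊆ T <;> by_cases c2 : S ⊆ T' <;>
      simpa [c1, c2, erase_insert n1, erase_insert n2, erase_eq_of_notMem n1,
        erase_eq_of_notMem n2] using this
  have m0 : build N F S false false = F.image fun T => if S ⊆ T then insert N T else T := by
    simp [build]
  have m1 : build N F S a false = build N F S false false ∪ (if a then {S} else ∅) := by
    simp [build]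
  have m2 : build N F S a b = build N F S a false ∪ (if b then {{N}} else ∅) := by
    simp [build]
  have d1 : S ∉ build N F S false false := by rw [mem_build_self h hS]; simp
  have d2 : {N} ∉ build N F S a false := by rw [mem_build_singleton h hS]; simp
  rw [m2]
  have e1 : (build N F S a false).card = F.card + a.toNat := by
    rw [m1]
    cases a
    · simp [m0, h1]
    · simp [d1, m0 ▸ h1]
  cases b
  · simp [e1]
  · simp only [if_true]
    rw [card_union_of_disjoint (by simpa using d2), e1]; simp

/-- restriction of membership to old labels -/
theorem build_forall {N : ℕ} {F : Finset (Finset ℕ)} (h : LF N F) {S : Finset ℕ}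
    {a b : Bool} (hS : S ∈ F) (P : Finset ℕ → Prop) (hP : P ∅)
    (hins : ∀ T, P (insert N T) ↔ P T) :
    (∀ U ∈ build N F S a b, P U) ↔ ∀ U ∈ F, P U := by
  constructor
  · intro H U hU
    by_cases hSU : S ⊆ U
    · rw [← hins]; exact H _ (mem_build.2 (Or.inl ⟨U, hU, hSU, rfl⟩))
    · exact H _ (mem_build.2 (by simp [hU, hSU]))
  · intro H U hU
    rw [mem_build] at hU
    rcases hU with ⟨T, hT, hST, rfl⟩ | ⟨hU, hS'⟩ | ⟨ha', rfl⟩ | ⟨_, rfl⟩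
    · rw [hins]; exact H T hT
    · exact H U hU
    · exact H U hS
    · have := (hins ∅).2 hP
      simpa using this

theorem fimpp_build {N : ℕ} {F : Finset (Finset ℕ)} (h : LF N F) {S : Finset ℕ}
    {a b : Bool} (hS : S ∈ F) :
    fimpp (N+1) (build N F S a b) = fimpp N F + (!b).toNat := by
  unfold fimpp
  rw [range_add_one, filter_insert]
  have e : ((range N).filter fun i => ∃ j ∈ range i, ∀ S_1 ∈ build N F S a b, i ∈ S_1 → j ∈ S_1) =
      (range N).filter fun i => ∃ j ∈ range i, ∀ S_1 ∈ F, i ∈ S_1 → j ∈ S_1 := by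
    apply filter_congr
    intro i hi
    simp only [mem_range] at hi
    have : ∀ j ∈ range i, ((∀ S_1 ∈ build N F S a b, i ∈ S_1 → j ∈ S_1) ↔
        ∀ S_1 ∈ F, i ∈ S_1 → j ∈ S_1) := by
      intro j hj
      simp only [mem_range] at hj
      apply build_forall h hS (fun U => i ∈ U → j ∈ U) (by simp)
      intro T
      have e1 : i ≠ N := by omega
      have e2 : j ≠ N := by omega
      simp [e1, e2]
    constructor
    · rintro ⟨j, hj, H⟩; exact ⟨j, hj, (this j hj).1 H⟩
    · rintro ⟨j, hj, H⟩; exact ⟨j, hj, (this j hj).2 H⟩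
  rw [e]
  have hN : (∃ j ∈ range N, ∀ S_1 ∈ build N F S a b, N ∈ S_1 → j ∈ S_1) ↔ b = false := by
    constructor
    · rintro ⟨j, hj, H⟩
      by_contra hb
      have := H {N} ((mem_build_singleton h hS).2 (by simpa using hb)) (by simp)
      simp at this hj
      omega
    · rintro rfl
      obtain ⟨j, hj⟩ := h.ne S hS
      refine ⟨j, h.sub S hS hj, fun U hU hNU => ?_⟩
      rw [mem_build] at hU
      rcases hU with ⟨T, hT, hST, rfl⟩ | ⟨hU, hS'⟩ | ⟨ha', rfl⟩ | ⟨h1, rfl⟩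
      · exact mem_insert_of_mem (hST hj)
      · exact absurd hNU (h.notMem hU)
      · exact hj
      · simp at h1
  cases b
  · rw [if_pos (hN.2 rfl), card_insert_of_notMem (by simp)]; rfl
  · rw [if_neg (by rw [hN]; simp)]; rfl

open Classical in
theorem flead_build {N : ℕ} {F : Finset (Finset ℕ)} (h : LF N F) {S : Finset ℕ}
    {a b : Bool} (hS : S ∈ F) :
    flead (N+1) (build N F S a b) = flead N F + (if a = false ∧ Lab F S then 1 else 0) := by
  unfold flead
  rw [range_add_one, filter_insert]
  have e : (range N).filter (FLead (build N F S a b)) = (range N).filter (FLead F) := by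
    apply filter_congr
    intro i hi
    simp only [mem_range] at hi
    unfold FLead
    have : ∀ j < i, ((∀ T ∈ build N F S a b, j ∈ T → i ∈ T) ↔
        ∀ T ∈ F, j ∈ T → i ∈ T) := by
      intro j hj
      apply build_forall h hS (fun U => j ∈ U → i ∈ U) (by simp)
      intro T
      have e1 : i ≠ N := by omega
      have e2 : j ≠ N := by omega
      simp [e1, e2]
    rw [build_forall h hS (fun U => i ∈ U → (∃ k ∈ U, k < i) →
      ∃ j ∈ U, j < i ∧ ∀ T ∈ build N F S a b, j ∈ T → i ∈ T)]
    · constructor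
      · intro H U hU hi hk
        obtain ⟨j, hj, hji, H⟩ := H U hU hi hk
        exact ⟨j, hj, hji, (this j hji).1 H⟩
      · intro H U hU hi hk
        obtain ⟨j, hj, hji, H⟩ := H U hU hi hk
        exact ⟨j, hj, hji, (this j hji).2 H⟩
    · simp
    · intro T
      have e1 : i ≠ N := by omega
      have e2 : ¬ N < i := by omega
      simp [e1, e2]
  rw [e]
  have hN : FLead (build N F S a b) N ↔ (a = false ∧ Lab F S) := by
    constructor
    · intro H
      obtain ⟨s, hs⟩ := h.ne S hS
      obtain ⟨j, hj, hjN, H⟩ := H (insert N S) ((mem_build_insert h hS hS).2 Subset.rfl) (by simp)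
        ⟨s, by simp [hs], by simpa using h.sub S hS hs⟩
      have hjS : j ∈ S := by
        rcases mem_insert.1 hj with h1 | h1
        · omega
        · exact h1
      constructor
      · by_contra ha
        exact h.notMem hS (H S ((mem_build_self h hS).2 (by simpa using ha)) hjS)
      · refine ⟨j, hjS, fun T hT hjT => ?_⟩
        by_contra hST
        exact h.notMem hT (H T (mem_build.2 (by simp [hT, hST])) hjT)
    · rintro ⟨rfl, j, hjS, hj⟩ U hU hNU ⟨k, hk, hkN⟩
      have hSU : S ⊆ U := by
        rw [mem_build] at hU
        rcases hU with ⟨T, hT, hST, rfl⟩ | ⟨hU, hS'⟩ | ⟨ha', rfl⟩ | ⟨h1, rfl⟩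
        · exact hST.trans (subset_insert _ _)
        · exact absurd hNU (h.notMem hU)
        · exact Subset.rfl
        · simp at hk; omega
      refine ⟨j, hSU hjS, by simpa using h.sub S hS hjS, fun T hT hjT => ?_⟩
      rw [mem_build] at hT
      rcases hT with ⟨T, hT, hST, rfl⟩ | ⟨hU, hS'⟩ | ⟨ha', rfl⟩ | ⟨h1, rfl⟩
      · simp
      · exact absurd (hj T hU hjT) hS'
      · simp at ha'
      · simp
  by_cases hc : a = false ∧ Lab F S
  · rw [if_pos (hN.2 hc), if_pos hc, card_insert_of_notMem (by simp)]
  · rw [if_neg (by rwa [hN]), if_neg hc]; rfl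

end GregAux

namespace GregAux
open Finset

/-- maximal proper members -/
def Mx (N : ℕ) (F : Finset (Finset ℕ)) (S : Finset ℕ) : Prop :=
  S ≠ range N ∧ ∀ T ∈ F, S ⊆ T → T = S ∨ T = range N

theorem insert_eq_iff {N : ℕ} {S T : Finset ℕ} (hS : N ∉ S) (hT : N ∉ T) :
    insert N S = insert N T ↔ S = T := by
  constructor
  · intro e
    have := congrArg (fun X => X.erase N) e
    simpa only [erase_insert hS, erase_insert hT] using this
  · rintro rfl; rfl

theorem insert_subset_iff' {N : ℕ} {S T : Finset ℕ} (hS : N ∉ S) :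
    insert N S ⊆ insert N T ↔ S ⊆ T := by
  constructor
  · intro e i hi
    rcases mem_insert.1 (e (mem_insert_of_mem hi)) with h1 | h1
    · exact absurd (h1 ▸ hi) hS
    · exact h1
  · exact insert_subset_insert _

theorem mx_insert {N : ℕ} {F : Finset (Finset ℕ)} (h : LF N F) {S : Finset ℕ}
    {a b : Bool} (hS : S ∈ F) {T : Finset ℕ} (hT : T ∈ F) (hST : S ⊆ T) :
    Mx (N+1) (build N F S a b) (insert N T) ↔ Mx N F T := by
  have nT := h.notMem hT
  have nr : N ∉ range N := by simp
  unfold Mx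
  rw [range_add_one, Ne, insert_eq_iff nT nr]
  apply and_congr_right
  intro _
  constructor
  · intro H T' hT' hTT'
    have := H (insert N T') ((mem_build_insert h hS hT').2 (hST.trans hTT'))
      (insert_subset_insert _ hTT')
    rwa [insert_eq_iff (h.notMem hT') nT, insert_eq_iff (h.notMem hT') nr] at this
  · intro H V hV hTV
    have hNV := hTV (mem_insert_self _ _)
    rw [mem_build] at hV
    rcases hV with ⟨T', hT', hST', rfl⟩ | ⟨hU, hS'⟩ | ⟨ha', rfl⟩ | ⟨h1, rfl⟩
    · rw [insert_eq_iff (h.notMem hT') nT, insert_eq_iff (h.notMem hT') nr]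
      exact H T' hT' ((insert_subset_iff' nT).1 hTV)
    · exact absurd hNV (h.notMem hU)
    · exact absurd hNV (h.notMem hS)
    · obtain ⟨s, hs⟩ := h.ne T hT
      have := hTV (mem_insert_of_mem hs)
      simp at this
      exact absurd (this ▸ hs) nT

theorem mx_old {N : ℕ} {F : Finset (Finset ℕ)} (h : LF N F) {S : Finset ℕ}
    {a b : Bool} (hA : Allowed N F S a b) {U : Finset ℕ} (hU : U ∈ F) (hSU : ¬ S ⊆ U) :
    Mx (N+1) (build N F S a b) U ↔ Mx N F U := by
  obtain ⟨hS, ha, hab⟩ := hA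
  have nU := h.notMem hU
  have nr : N ∉ range N := by simp
  have h1 : U ≠ range N := by rintro rfl; exact hSU (h.sub S hS)
  have h2 : U ≠ range (N+1) := by rintro rfl; simp at nU
  unfold Mx
  simp only [Ne, h1, not_false_eq_true, true_and, h2]
  constructor
  · intro H T hT hUT
    by_cases hST : S ⊆ T
    · rcases H (insert N T) ((mem_build_insert h hS hT).2 hST) (hUT.trans (subset_insert _ _)) with
        h3 | h3
      · exact absurd (h3 ▸ mem_insert_self _ _) nU
      · right
        rwa [range_add_one, insert_eq_iff (h.notMem hT) nr] at h3
    · rcases H T (mem_build.2 (by simp [hT, hST])) hUT with h3 | h3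
      · left; exact h3
      · exfalso
        apply h.notMem hT
        rw [h3]; simp
  · intro H V hV hUV
    rw [mem_build] at hV
    rcases hV with ⟨T', hT', hST', rfl⟩ | ⟨hV, hS'⟩ | ⟨ha', rfl⟩ | ⟨h1, rfl⟩
    · have : U ⊆ T' := by
        intro i hi
        rcases mem_insert.1 (hUV hi) with h1 | h1
        · exact absurd (h1 ▸ hi) nU
        · exact h1
      rcases H T' hT' this with h3 | h3
      · exact absurd (h3 ▸ hST') hSU
      · right; rw [h3, range_add_one]
    · rcases H V hV hUV with h3 | h3
      · left; exact h3
      · exact absurd (h3 ▸ h.sub S hS) hS'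
    · rcases H V hS hUV with h3 | h3
      · exact absurd (h3 ▸ Subset.rfl) hSU
      · exact absurd h3 (ha ha')
    · obtain ⟨s, hs⟩ := h.ne U hU
      have := hUV hs
      simp at this
      exact absurd (this ▸ hs) nU

theorem mx_self {N : ℕ} {F : Finset (Finset ℕ)} (h : LF N F) {S : Finset ℕ}
    {a b : Bool} (hS : S ∈ F) (hne : S ≠ range N) : ¬ Mx (N+1) (build N F S a b) S := by
  rintro ⟨_, H⟩
  rcases H _ ((mem_build_insert h hS hS).2 Subset.rfl) (subset_insert _ _) with h1 | h1
  · exact h.notMem hS (h1 ▸ mem_insert_self _ _)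
  · rw [range_add_one, insert_eq_iff (h.notMem hS) (by simp)] at h1
    exact hne h1

theorem mx_new {N : ℕ} (hN : 1 ≤ N) {F : Finset (Finset ℕ)} (h : LF N F) {S : Finset ℕ}
    {a b : Bool} (hS : S ∈ F) : Mx (N+1) (build N F S a b) {N} ↔ S = range N := by
  constructor
  · rintro ⟨_, H⟩
    rcases H _ ((mem_build_insert h hS hS).2 Subset.rfl) (by simp) with h1 | h1
    · obtain ⟨s, hs⟩ := h.ne S hS
      have : s ∈ insert N S := mem_insert_of_mem hs
      rw [h1] at this
      simp at this
      exact absurd (this ▸ hs) (h.notMem hS)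
    · rwa [range_add_one, insert_eq_iff (h.notMem hS) (by simp)] at h1
  · rintro rfl
    constructor
    · intro e
      have := congrArg card e
      simp at this; omega
    · intro V hV hNV
      simp only [singleton_subset_iff] at hNV
      rw [mem_build] at hV
      rcases hV with ⟨T', hT', hST', rfl⟩ | ⟨hU, hS'⟩ | ⟨ha', rfl⟩ | ⟨h1, rfl⟩
      · right
        rw [range_add_one, Subset.antisymm hST' (h.sub T' hT')]
      · exact absurd hNV (h.notMem hU)
      · exact absurd hNV (h.notMem hS)
      · simp

theorem fdeg_build {N : ℕ} (hN : 1 ≤ N) {F : Finset (Finset ℕ)} (h : LF N F) {S : Finset ℕ}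
    {a b : Bool} (hA : Allowed N F S a b) :
    fdeg (N+1) (build N F S a b) = fdeg N F + (if S = range N then 1 else 0) := by
  classical
  have hS := hA.1
  have hb : S = range N → b = true := by
    rintro rfl
    rcases hA.2.2 with h1 | h1 | h1
    · exact absurd rfl (hA.2.1 h1)
    · exact h1
    · exact absurd (h.lab_top hN) h1
  have e1 : ∀ M G, fdeg M G = (G.filter (Mx M G)).card := by
    intro M G
    unfold fdeg Mx
    congr
  rw [e1, e1]
  set f : Finset ℕ → Finset ℕ := fun T => if S ⊆ T then insert N T else T with hf
  have hfe : ∀ T ∈ F, (f T).erase N = T := by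
    intro T hT
    simp only [hf]
    split_ifs
    · exact erase_insert (h.notMem hT)
    · exact erase_eq_of_notMem (h.notMem hT)
  have hfm : ∀ T ∈ F, f T ∈ build N F S a b := by
    intro T hT
    simp only [hf]
    split_ifs with c
    · exact (mem_build_insert h hS hT).2 c
    · exact mem_build.2 (by simp [hT, c])
  have hfx : ∀ T ∈ F, (Mx (N+1) (build N F S a b) (f T) ↔ Mx N F T) := by
    intro T hT
    simp only [hf]
    split_ifs with c
    · exact mx_insert h hS hT c
    · exact mx_old h hA hT c
  have e2 : (build N F S a b).filter (Mx (N+1) (build N F S a b)) =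
      (F.filter (Mx N F)).image f ∪ (if S = range N then {{N}} else ∅) := by
    ext U
    simp only [mem_filter, mem_union, mem_image]
    constructor
    · rintro ⟨hU, hm⟩
      have hU' := hU
      rw [mem_build] at hU
      rcases hU with ⟨T', hT', hST', rfl⟩ | ⟨hV, hS'⟩ | ⟨ha', rfl⟩ | ⟨h1, rfl⟩
      · left; exact ⟨T', ⟨hT', (mx_insert h hS hT' hST').1 hm⟩, by simp [hf, hST']⟩
      · left; exact ⟨U, ⟨hV, (mx_old h hA hV hS').1 hm⟩, by simp [hf, hS']⟩
      · exact absurd hm (mx_self h hS (hA.2.1 ha'))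
      · right
        rw [if_pos ((mx_new hN h hS).1 hm)]; simp
    · rintro (⟨T, ⟨hT, hm⟩, rfl⟩ | hU)
      · exact ⟨hfm T hT, (hfx T hT).2 hm⟩
      · split_ifs at hU with c
        · simp only [mem_singleton] at hU
          subst hU
          exact ⟨(mem_build_singleton h hS).2 (hb c), (mx_new hN h hS).2 c⟩
        · simp at hU
  have hinj : Set.InjOn f (F.filter (Mx N F)) := by
    intro T hT T' hT' e
    simp only [coe_filter, Set.mem_setOf_eq] at hT hT'
    rw [← hfe T hT.1, e, hfe T' hT'.1]
  rw [e2, card_union_of_disjoint, card_image_of_injOn hinj]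
  · split_ifs <;> simp
  · split_ifs
    · rw [disjoint_singleton_right, mem_image]
      rintro ⟨T, hT, e⟩
      have h1 := hfe T (mem_filter.1 hT).1
      rw [e] at h1
      have h2 := h.ne T (mem_filter.1 hT).1
      simp [← h1] at h2
    · simp

open Classical in
/-- the finite set of all families -/
def Fams (N : ℕ) : Finset (Finset (Finset ℕ)) := ((range N).powerset.powerset).filter (LF N)

theorem mem_Fams {N : ℕ} {F : Finset (Finset ℕ)} : F ∈ Fams N ↔ LF N F := by
  classical
  unfold Fams
  rw [mem_filter]
  refine ⟨fun h => h.2, fun h => ⟨?_, h⟩⟩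
  rw [mem_powerset]
  intro S hS
  exact mem_powerset.2 (h.sub S hS)

open Classical in
theorem sum_Fams_succ {N : ℕ} (hN : 1 ≤ N) {M : Type*} [AddCommMonoid M]
    (f : Finset (Finset ℕ) → M) :
    ∑ F ∈ Fams (N+1), f F = ∑ F ∈ Fams N, ∑ S ∈ F, ∑ ab : Bool × Bool,
      if Allowed N F S ab.1 ab.2 then f (build N F S ab.1 ab.2) else 0 := by
  have e : ∀ F ∈ Fams N, (∑ S ∈ F, ∑ ab : Bool × Bool,
      if Allowed N F S ab.1 ab.2 then f (build N F S ab.1 ab.2) else 0) =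
      ∑ x ∈ (F ×ˢ (univ : Finset (Bool × Bool))).filter (fun x => Allowed N F x.1 x.2.1 x.2.2),
        f (build N F x.1 x.2.1 x.2.2) := by
    intro F _
    rw [sum_filter, sum_product]
  rw [sum_congr rfl e, sum_sigma']
  symm
  refine sum_bij (fun x _ => build N x.1 x.2.1 x.2.2.1 x.2.2.2) ?_ ?_ ?_ ?_
  · rintro ⟨F, S, a, b⟩ hx
    simp only [mem_sigma, mem_filter, mem_Fams] at hx
    exact mem_Fams.2 (hx.1.build hN hx.2.2)
  · rintro ⟨F, S, a, b⟩ hx ⟨F', S', a', b'⟩ hx' e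
    simp only [mem_sigma, mem_filter, mem_Fams] at hx hx' e
    have hF : F = F' := by rw [← del_build hx.1 hx.2.2.1, e, del_build hx'.1 hx'.2.2.1]
    subst hF
    obtain ⟨rfl, rfl, rfl⟩ := build_inj hx.1 hx.2.2.1 hx'.2.2.1 e
    rfl
  · intro F hF
    rw [mem_Fams] at hF
    obtain ⟨S, a, b, hA, e⟩ := hF.exists_build hN
    refine ⟨⟨del N F, S, a, b⟩, ?_, e.symm⟩
    simp only [mem_sigma, mem_filter, mem_Fams]
    exact ⟨hF.del hN, by simp [hA.1], hA⟩
  · intros; rfl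

theorem Fams_one : Fams 1 = {{{0}}} := by
  ext F
  rw [mem_Fams, mem_singleton]
  constructor
  · intro h
    ext S
    rw [mem_singleton]
    constructor
    · intro hS
      have h1 := h.sub S hS
      rcases subset_singleton_iff.1 h1 with h2 | h2
      · have := h.ne S hS
        simp [h2] at this
      · exact h2
    · rintro rfl; exact h.top
  · rintro rfl
    constructor <;> simp

theorem LF.one_le {N : ℕ} {F : Finset (Finset ℕ)} (h : LF N F) : 1 ≤ N := by
  by_contra hN
  obtain rfl : N = 0 := by omega
  have := h.ne _ h.top
  simp at this

theorem LF.invariants : ∀ N, 2 ≤ N → ∀ F, LF N F →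
    1 ≤ fdeg N F ∧ fdeg N F + 1 ≤ flead N F ∧ F.card ≤ 2 * N - 1 := by
  intro N hN
  induction N, hN using Nat.le_induction with
  | base =>
    intro F hF
    obtain ⟨S, a, b, hA, e⟩ := hF.exists_build le_rfl
    have hd := hF.del le_rfl
    rw [e]
    generalize GregAux.del 1 F = G at *
    have hG : G = {{0}} := by simpa [Fams_one] using mem_Fams.2 hd
    rw [fdeg_build le_rfl hd hA, flead_build hd hA.1, card_build hd hA.1]
    subst hG
    have hS : S = {0} := by simpa using hA.1
    subst hS
    have hl : Lab {{0}} {0} := ⟨0, by simp, by simp⟩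
    have ha : a = false := by
      by_contra ha
      exact hA.2.1 (by simpa using ha) rfl
    subst ha
    have e1 : fdeg 1 {{0}} = 0 := by decide
    have e2 : flead 1 {{0}} = 1 := by decide
    rw [e1, e2]
    simp [hl]
    cases b <;> simp
  | succ N hN ih =>
    intro F hF
    obtain ⟨S, a, b, hA, e⟩ := hF.exists_build (by omega)
    have hd := hF.del (by omega)
    rw [e]
    generalize GregAux.del N F = G at *
    obtain ⟨i1, i2, i3⟩ := ih G hd
    rw [fdeg_build (by omega) hd hA, flead_build hd hA.1, card_build hd hA.1]
    refine ⟨by omega, ?_, ?_⟩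
    · by_cases c : S = range N
      · subst c
        have hl := hd.lab_top (by omega)
        have ha : a = false := by
          by_contra ha
          exact hA.2.1 (by simpa using ha) rfl
        simp [ha, hl, i2]
      · rw [if_neg c]; omega
    · have := Bool.toNat_le a
      have := Bool.toNat_le b
      omega

theorem LF.card_le {N : ℕ} {F : Finset (Finset ℕ)} (h : LF N F) : F.card ≤ 2 * N := by
  rcases Nat.lt_or_ge N 2 with h1 | h1
  · have := h.one_le
    obtain rfl : N = 1 := by omega
    have hG : F = {{0}} := by simpa [Fams_one] using mem_Fams.2 h
    simp [hG]
  · have := (LF.invariants N h1 F h).2.2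
    omega

theorem LF.le_card {N : ℕ} {F : Finset (Finset ℕ)} (h : LF N F) : N ≤ F.card := by
  classical
  rw [← h.card_lab]
  exact (card_filter_le _ _).trans le_rfl

end GregAux

namespace GregAux
open Finset

theorem pderiv_shift (f : Fin 4 → MvPolynomial (Fin 4) ℚ) (hf : ∀ i, pderiv 1 (f i) = if i = 1 then 1 else 0)
    (p : MvPolynomial (Fin 4) ℚ) : pderiv 1 (bind₁ f p) = bind₁ f (pderiv 1 p) := by
  induction p using MvPolynomial.induction_on with
  | C a => simp
  | add p q hp hq => simp [hp, hq]
  | mul_X p i hp =>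
    simp only [map_mul, bind₁_X_right, Derivation.leibniz, hp, hf, smul_eq_mul, map_add, pderiv_X]
    by_cases h : i = 1
    · subst h; simp
    · simp [h]

theorem Rpoly_one : Rpoly 1 = 1 := by simp [Rpoly, Qpoly]

theorem Rpoly_succ (n : ℕ) : Rpoly (n+2) =
    (X 0 + C ((n : ℚ) + 1) * X 2 + C ((n : ℚ) + 1) * (X 1 + X 3)) * Rpoly (n + 1)
      + (X 1 + X 3) * ((X 1 + 1) * pderiv 1 (Rpoly (n + 1))) := by
  unfold Rpoly
  rw [pderiv_shift]
  · rw [Qpoly]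
    simp only [map_add, map_mul, bind₁_X_right, bind₁_C_right]
    simp
  · intro i
    fin_cases i <;> simp [pderiv_X]

/-- weight of a family -/
def wt (N : ℕ) (F : Finset (Finset ℕ)) : MvPolynomial (Fin 4) ℚ :=
  X 1 ^ (F.card - N) * X 3 ^ fimpp N F * X 0 ^ (fdeg N F - 1) * X 2 ^ (flead N F - fdeg N F - 1)

theorem pderiv_wt (N : ℕ) (F : Finset (Finset ℕ)) : pderiv 1 (wt N F) =
    ((F.card - N : ℕ) : MvPolynomial (Fin 4) ℚ) * X 1 ^ (F.card - N - 1) * X 3 ^ fimpp N F *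
      X 0 ^ (fdeg N F - 1) * X 2 ^ (flead N F - fdeg N F - 1) := by
  unfold wt
  simp [Derivation.leibniz, Derivation.leibniz_pow, pderiv_X]
  ring

open Classical in
theorem inner_top {N : ℕ} (hN : 2 ≤ N) {F : Finset (Finset ℕ)} (h : LF N F) :
    (∑ ab : Bool × Bool, if Allowed N F (range N) ab.1 ab.2 then
      wt (N+1) (build N F (range N) ab.1 ab.2) else 0) = X 0 * wt N F := by
  have hl := h.lab_top (by omega)
  have hS := h.top
  obtain ⟨i1, i2, i3⟩ := LF.invariants N hN F h
  have h1 : Allowed N F (range N) false true := ⟨hS, by simp, by simp⟩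
  have i4 := h.le_card
  rw [Fintype.sum_prod_type]
  simp only [Fintype.sum_bool]
  rw [if_neg (by simp [Allowed]), if_neg (by simp [Allowed]), if_pos h1,
    if_neg (by simp [Allowed, hl])]
  unfold wt
  rw [card_build h hS, fdeg_build (by omega) h h1, flead_build h hS, fimpp_build h hS]
  simp only [hl, if_true, and_self]
  obtain ⟨d, hd⟩ : ∃ d, fdeg N F = d + 1 := ⟨fdeg N F - 1, by omega⟩
  rw [show F.card + false.toNat + true.toNat - (N+1) = F.card - N by simp,
    show flead N F + 1 - (fdeg N F + 1) - 1 = flead N F - fdeg N F - 1 by omega, hd]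
  simp
  ring

open Classical in
theorem inner_lab {N : ℕ} (hN : 2 ≤ N) {F : Finset (Finset ℕ)} (h : LF N F) {S : Finset ℕ}
    (hS : S ∈ F) (hne : S ≠ range N) (hl : Lab F S) :
    (∑ ab : Bool × Bool, if Allowed N F S ab.1 ab.2 then
      wt (N+1) (build N F S ab.1 ab.2) else 0) = (X 2 + X 3 + X 1) * wt N F := by
  obtain ⟨i1, i2, i3⟩ := LF.invariants N hN F h
  have h1 : Allowed N F S false true := ⟨hS, by simp, by simp⟩
  have h2 : Allowed N F S true true := ⟨hS, by simp [hne], by simp⟩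
  have h3 : Allowed N F S true false := ⟨hS, by simp [hne], by simp⟩
  have i4 := h.le_card
  rw [Fintype.sum_prod_type]
  simp only [Fintype.sum_bool]
  rw [if_pos h2, if_pos h3, if_pos h1, if_neg (by simp [Allowed, hl])]
  unfold wt
  simp only [card_build h hS, fdeg_build (show 1 ≤ N by omega) h h1,
    fdeg_build (show 1 ≤ N by omega) h h2, fdeg_build (show 1 ≤ N by omega) h h3,
    flead_build h hS, fimpp_build h hS]
  simp only [hl, if_true, and_self, hne, if_false]
  rw [show F.card + false.toNat + true.toNat - (N+1) = F.card - N by simp,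
    show F.card + true.toNat + true.toNat - (N+1) = F.card - N + 1 by simp; omega,
    show F.card + true.toNat + false.toNat - (N+1) = F.card - N by simp,
    show flead N F + 1 - (fdeg N F + 0) - 1 = flead N F - fdeg N F - 1 + 1 by omega]
  simp
  ring

open Classical in
theorem inner_unl {N : ℕ} (hN : 2 ≤ N) {F : Finset (Finset ℕ)} (h : LF N F) {S : Finset ℕ}
    (hS : S ∈ F) (hl : ¬ Lab F S) (hc : N < F.card) :
    (∑ ab : Bool × Bool, if Allowed N F S ab.1 ab.2 then
      wt (N+1) (build N F S ab.1 ab.2) else 0) = (X 1 + X 3) * (X 1 + 1) *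
       (X 1 ^ (F.card - N - 1) * X 3 ^ fimpp N F *
      X 0 ^ (fdeg N F - 1) * X 2 ^ (flead N F - fdeg N F - 1)) := by
  have hne : S ≠ range N := by
    rintro rfl
    exact hl (h.lab_top (by omega))
  obtain ⟨i1, i2, i3⟩ := LF.invariants N hN F h
  have h1 : Allowed N F S false true := ⟨hS, by simp, by simp⟩
  have h2 : Allowed N F S true true := ⟨hS, by simp [hne], by simp⟩
  have h3 : Allowed N F S true false := ⟨hS, by simp [hne], by simp⟩
  have h4 : Allowed N F S false false := ⟨hS, by simp, by simp [hl]⟩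
  have i4 := h.le_card
  rw [Fintype.sum_prod_type]
  simp only [Fintype.sum_bool]
  rw [if_pos h2, if_pos h3, if_pos h1, if_pos h4]
  unfold wt
  simp only [card_build h hS, fdeg_build (show 1 ≤ N by omega) h h1,
    fdeg_build (show 1 ≤ N by omega) h h2, fdeg_build (show 1 ≤ N by omega) h h3,
    fdeg_build (show 1 ≤ N by omega) h h4,
    flead_build h hS, fimpp_build h hS]
  obtain ⟨u, hu⟩ : ∃ u, F.card = N + 1 + u := ⟨F.card - (N+1), by omega⟩
  simp only [hl, if_false, and_false, hne, hu]
  rw [show N + 1 + u + false.toNat + true.toNat - (N+1) = u + 1 by simp; omega,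
    show N + 1 + u + true.toNat + true.toNat - (N+1) = u + 2 by simp; omega,
    show N + 1 + u + true.toNat + false.toNat - (N+1) = u + 1 by simp; omega,
    show N + 1 + u + false.toNat + false.toNat - (N+1) = u by simp,
    show N + 1 + u - N - 1 = u by omega]
  simp
  ring

theorem inner_sum {n : ℕ} {F : Finset (Finset ℕ)} (h : LF (n+2) F) :
    (∑ S ∈ F, ∑ ab : Bool × Bool, open Classical in if Allowed (n+2) F S ab.1 ab.2 then
      wt (n+2+1) (build (n+2) F S ab.1 ab.2) else 0) =
    (X 0 + C ((n : ℚ) + 1) * X 2 + C ((n : ℚ) + 1) * (X 1 + X 3)) * wt (n+2) F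
      + (X 1 + X 3) * ((X 1 + 1) * pderiv 1 (wt (n+2) F)) := by
  classical
  have hc := h.card_lab
  have htop : range (n+2) ∈ F.filter (Lab F) := mem_filter.2 ⟨h.top, h.lab_top (by omega)⟩
  have hc2 := card_filter_add_card_filter_not (s := F) (Lab F)
  rw [← sum_filter_add_sum_filter_not F (Lab F), ← add_sum_erase _ _ htop,
    inner_top (by omega) h, pderiv_wt]
  rw [sum_congr rfl (g := fun _ => (X 2 + X 3 + X 1) * wt (n+2) F), sum_const,
    card_erase_of_mem htop, hc]
  · rw [sum_congr (s₁ := F.filter fun S => ¬ Lab F S) rfl (g := fun _ => (X 1 + X 3) * (X 1 + 1) *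
       (X 1 ^ (F.card - (n+2) - 1) * X 3 ^ fimpp (n+2) F *
      X 0 ^ (fdeg (n+2) F - 1) * X 2 ^ (flead (n+2) F - fdeg (n+2) F - 1))), sum_const,
      show (F.filter fun S => ¬ Lab F S).card = F.card - (n+2) by omega]
    · simp only [nsmul_eq_mul, map_add, map_natCast, map_one]
      push_cast
      ring
    · intro S hS
      rw [mem_filter] at hS
      apply inner_unl (by omega) h hS.1 hS.2
      have : 0 < (F.filter fun S => ¬ Lab F S).card := card_pos.2 ⟨S, mem_filter.2 hS⟩
      omega
  · intro S hS
    rw [mem_erase, mem_filter] at hS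
    exact inner_lab (by omega) h hS.2.1 hS.1 hS.2.2

theorem Rpoly_eq_sum_Fams (n : ℕ) : Rpoly (n+1) = ∑ F ∈ Fams (n+2), wt (n+2) F := by
  induction n with
  | zero =>
    classical
    rw [Rpoly_one, sum_Fams_succ le_rfl, Fams_one, sum_singleton, sum_singleton]
    have hd : LF 1 {{0}} := mem_Fams.1 (by simp [Fams_one])
    have hl : Lab {{0}} {0} := ⟨0, by simp, by simp⟩
    have hS : ({0} : Finset ℕ) ∈ ({{0}} : Finset (Finset ℕ)) := by simp
    have h1 : Allowed 1 {{0}} {0} false true := ⟨hS, by simp, by simp⟩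
    have e1 : fdeg 1 {{0}} = 0 := by decide
    have e2 : flead 1 {{0}} = 1 := by decide
    have e3 : fimpp 1 {{0}} = 0 := by decide
    rw [Fintype.sum_prod_type]
    simp only [Fintype.sum_bool]
    rw [if_neg (by simp [Allowed]), if_neg (by simp [Allowed]), if_pos h1,
      if_neg (by simp [Allowed, hl])]
    unfold wt
    rw [card_build hd hS, fdeg_build le_rfl hd h1, flead_build hd hS, fimpp_build hd hS, e1, e2, e3]
    simp [hl]
  | succ n ih =>
    rw [Rpoly_succ, ih, show n + 1 + 2 = n + 2 + 1 by omega, sum_Fams_succ (N := n+2) (by omega),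
      sum_congr rfl (fun F hF => inner_sum (mem_Fams.1 hF)), sum_add_distrib, map_sum,
      mul_sum, mul_sum, mul_sum]

end GregAux

namespace GregAux
open Finset
open GregRaw

section raw
variable {n m : ℕ} {p : Fin n ⊕ Fin m → Fin n ⊕ Fin m}

theorem desc_refl (v : Fin n ⊕ Fin m) : Desc p v v := ⟨0, rfl⟩

theorem desc_parent (v : Fin n ⊕ Fin m) : Desc p v (p v) := ⟨1, rfl⟩

theorem Desc_trans {a b c : Fin n ⊕ Fin m} (h : Desc p a b) (h' : Desc p b c) : Desc p a c := by
  obtain ⟨k, rfl⟩ := h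
  obtain ⟨l, rfl⟩ := h'
  exact ⟨l + k, iterate_add_apply p l k a⟩

theorem desc_linear {w a b : Fin n ⊕ Fin m} (h : Desc p w a) (h' : Desc p w b) :
    Desc p a b ∨ Desc p b a := by
  obtain ⟨k, rfl⟩ := h
  obtain ⟨l, rfl⟩ := h'
  rcases Nat.le_total k l with h | h
  · left
    refine ⟨l - k, ?_⟩
    rw [← iterate_add_apply, Nat.sub_add_cancel h]
  · right
    refine ⟨k - l, ?_⟩
    rw [← iterate_add_apply, Nat.sub_add_cancel h]

theorem desc_cases {v a : Fin n ⊕ Fin m} (h : Desc p v a) : v = a ∨ Desc p (p v) a := by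
  obtain ⟨k, rfl⟩ := h
  cases k with
  | zero => left; rfl
  | succ k => right; exact ⟨k, rfl⟩

theorem desc_child {v a : Fin n ⊕ Fin m} (h : Desc p v a) (hne : v ≠ a) :
    ∃ c, c ≠ a ∧ p c = a ∧ Desc p v c := by
  obtain ⟨k, hk⟩ := h
  induction k with
  | zero => exact absurd hk hne
  | succ k ih =>
    by_cases h1 : p^[k] v = a
    · exact ih h1
    · exact ⟨p^[k] v, h1, by rw [← iterate_succ_apply' p k v, hk], k, rfl⟩

theorem root_unique {v w : Fin n ⊕ Fin m} (hv : gregRoot v) (hw : gregRoot w) : v = w := by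
  obtain ⟨a, ha, rfl⟩ := hv
  obtain ⟨b, hb, rfl⟩ := hw
  congr 1
  ext
  omega

theorem iterate_root (hfix : ∀ v, gregRoot v → p v = v) {v : Fin n ⊕ Fin m} (hv : gregRoot v)
    (k : ℕ) : p^[k] v = v := iterate_fixed (hfix v hv) k

theorem root_of_le (hfix : ∀ v, gregRoot v → p v = v) {v : Fin n ⊕ Fin m} {k l : ℕ} (hkl : k ≤ l)
    (hk : gregRoot (p^[k] v)) : gregRoot (p^[l] v) := by
  obtain ⟨d, rfl⟩ := Nat.exists_eq_add_of_le hkl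
  rw [Nat.add_comm, iterate_add_apply, iterate_root hfix hk]
  exact hk

theorem desc_antisymm (hfix : ∀ v, gregRoot v → p v = v) (hreach : ∀ v, ∃ k, gregRoot (p^[k] v))
    {v a : Fin n ⊕ Fin m} (h : Desc p v a) (h' : Desc p a v) : v = a := by
  obtain ⟨k, rfl⟩ := h
  obtain ⟨l, hl⟩ := h'
  by_cases hk : k = 0
  · subst hk; rfl
  rw [← iterate_add_apply] at hl
  obtain ⟨K, hK⟩ := hreach v
  have h1 : p^[(l + k) * K] v = v := by
    rw [iterate_mul]
    exact iterate_fixed hl K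
  have h2 : gregRoot (p^[(l+k)*K] v) := by
    apply root_of_le hfix _ hK
    have : 1 ≤ l + k := by omega
    nlinarith
  rw [h1] at h2
  rw [iterate_root hfix h2]

open Classical in
/-- the set of labels of descendants -/
def DS (p : Fin n ⊕ Fin m → Fin n ⊕ Fin m) (v : Fin n ⊕ Fin m) : Finset ℕ :=
  (univ.filter fun i : Fin n => Desc p (Sum.inl i) v).image Fin.val

theorem mem_DS {v : Fin n ⊕ Fin m} {j : ℕ} :
    j ∈ DS p v ↔ ∃ i : Fin n, i.val = j ∧ Desc p (Sum.inl i) v := by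
  unfold DS
  simp only [mem_image, mem_filter, mem_univ, true_and]
  constructor
  · rintro ⟨a, b, c⟩; exact ⟨a, c, b⟩
  · rintro ⟨a, b, c⟩; exact ⟨a, c, b⟩

theorem val_mem_DS {v : Fin n ⊕ Fin m} {i : Fin n} :
    i.val ∈ DS p v ↔ Desc p (Sum.inl i) v := by
  rw [mem_DS]
  constructor
  · rintro ⟨j, hj, h⟩
    rwa [← Fin.ext hj]
  · intro h; exact ⟨i, rfl, h⟩

theorem DS_mono {v a : Fin n ⊕ Fin m} (h : Desc p v a) : DS p v ⊆ DS p a := by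
  intro j hj
  obtain ⟨i, rfl, hi⟩ := mem_DS.1 hj
  exact val_mem_DS.2 (Desc_trans hi h)

theorem beta_eq (a : Fin n ⊕ Fin m) : beta p a = sInf (DS p a : Set ℕ) := by
  unfold beta
  congr 1
  ext j
  simp [mem_DS]

/-- faithful representation of the tree by descendant sets -/
structure Rep (p : Fin n ⊕ Fin m → Fin n ⊕ Fin m) : Prop where
  fix : ∀ v, gregRoot v → p v = v
  reach : ∀ v, ∃ k, gregRoot (p^[k] v)
  ord : ∀ v a, Desc p v a ↔ DS p v ⊆ DS p a
  ne : ∀ v, (DS p v).Nonempty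

theorem Rep.anti (h : Rep p) {v a : Fin n ⊕ Fin m} (h1 : Desc p v a) (h2 : Desc p a v) : v = a :=
  desc_antisymm h.fix h.reach h1 h2

theorem Rep.inj (h : Rep p) : Injective (DS p) := by
  intro v a e
  exact h.anti ((h.ord v a).2 e.subset) ((h.ord a v).2 e.symm.subset)

theorem GregCond.rep (h : GregCond n m p) : Rep p := by
  classical
  obtain ⟨hfix, hreach', hch, -⟩ := h
  have hreach : ∀ v, ∃ k, gregRoot (p^[k] v) := fun v => (hreach' v).imp fun _ h => h.2
  have anti := @desc_antisymm n m p hfix hreach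
  have hne : ∀ N v, (univ.filter fun w => Desc p w v).card ≤ N → (DS p v).Nonempty := by
    intro N
    induction N with
    | zero =>
      intro v hv
      exfalso
      have : v ∈ univ.filter fun w => Desc p w v := by simp [desc_refl]
      have := card_pos.2 ⟨v, this⟩
      omega
    | succ N ih =>
      intro v hv
      rcases v with i | u
      · exact ⟨i.val, val_mem_DS.2 (desc_refl _)⟩
      · obtain ⟨c, hc⟩ : (children p (Sum.inr u)).Nonempty := by
          rw [← Set.ncard_pos]
          have := hch u
          omega
        obtain ⟨hc1, hc2⟩ := hc
        have hcu : Desc p c (Sum.inr u) := hc2 ▸ desc_parent c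
        have : (DS p c).Nonempty := by
          apply ih
          have : (univ.filter fun w => Desc p w c).card < (univ.filter fun w => Desc p w (Sum.inr u)).card := by
            apply card_lt_card
            rw [ssubset_iff_of_subset]
            · refine ⟨Sum.inr u, by simp [desc_refl], ?_⟩
              simp only [mem_filter, mem_univ, true_and]
              intro h
              exact hc1 (anti hcu h)
            · intro w hw
              simp only [mem_filter, mem_univ, true_and] at hw ⊢
              exact Desc_trans hw hcu
          omega
        exact this.mono (DS_mono hcu)
  have hne' : ∀ v, (DS p v).Nonempty := fun v => hne _ v le_rfl
  refine ⟨hfix, hreach, fun v a => ⟨DS_mono, fun hsub => ?_⟩, hne'⟩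
  obtain ⟨j, hj⟩ := hne' v
  obtain ⟨i, rfl, hi⟩ := mem_DS.1 hj
  have hia := val_mem_DS.1 (hsub hj)
  rcases desc_linear hi hia with h | h
  · exact h
  by_cases hva : a = v
  · subst hva; exact desc_refl _
  exfalso
  obtain ⟨c, hc1, hc2, hac⟩ := desc_child h hva
  have hcv : Desc p c v := hc2 ▸ desc_parent c
  rcases v with i' | u
  · have h1 : i'.val ∈ DS p a := hsub (val_mem_DS.2 (desc_refl _))
    exact hva (anti h (val_mem_DS.1 h1))
  · obtain ⟨d, hd, hdc⟩ := Set.exists_ne_of_one_lt_ncard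
      (show 1 < (children p (Sum.inr u)).ncard from hch u) c
    obtain ⟨hd1, hd2⟩ := hd
    have hdu : Desc p d (Sum.inr u) := hd2 ▸ desc_parent d
    obtain ⟨j', hj'⟩ := hne' d
    obtain ⟨i', rfl, hi'⟩ := mem_DS.1 hj'
    have h2 := val_mem_DS.1 (hsub (DS_mono hdu hj'))
    have h3 := Desc_trans h2 hac
    rcases desc_linear hi' h3 with h4 | h4
    · rcases desc_cases h4 with h5 | h5
      · exact hdc h5
      · rw [hd2] at h5
        exact hc1 (anti hcv h5)
    · rcases desc_cases h4 with h5 | h5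
      · exact hdc h5.symm
      · rw [hc2] at h5
        exact hd1 (anti hdu h5)

/-- the family of a tree -/
def Fam (p : Fin n ⊕ Fin m → Fin n ⊕ Fin m) : Finset (Finset ℕ) := univ.image (DS p)

theorem mem_Fam {S : Finset ℕ} : S ∈ Fam p ↔ ∃ v, DS p v = S := by simp [Fam]

theorem DS_mem_Fam (v : Fin n ⊕ Fin m) : DS p v ∈ Fam p := mem_Fam.2 ⟨v, rfl⟩

theorem Rep.card_Fam (h : Rep p) : (Fam p).card = n + m := by
  unfold Fam
  rw [card_image_of_injective _ h.inj]; simp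

theorem Rep.desc_root (h : Rep p) (v r : Fin n ⊕ Fin m) (hr : gregRoot r) : Desc p v r := by
  obtain ⟨k, hk⟩ := h.reach v
  exact ⟨k, root_unique hk hr⟩

theorem DS_sub (v : Fin n ⊕ Fin m) : DS p v ⊆ range n := by
  intro j hj
  obtain ⟨i, rfl, _⟩ := mem_DS.1 hj
  simp

theorem Rep.DS_root (h : Rep p) (r : Fin n ⊕ Fin m) (hr : gregRoot r) : DS p r = range n := by
  apply Subset.antisymm (DS_sub r)
  intro j hj
  have hj' : j < n := by simpa using hj
  exact mem_DS.2 ⟨⟨j, hj'⟩, rfl, h.desc_root _ _ hr⟩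

theorem Rep.eq_root (h : Rep p) {r a : Fin n ⊕ Fin m} (hr : gregRoot r) (ha : Desc p r a) : a = r := by
  obtain ⟨k, rfl⟩ := ha
  exact iterate_root h.fix hr k

theorem Rep.root_iff (h : Rep p) (hn : 0 < n) (v : Fin n ⊕ Fin m) : gregRoot v ↔ DS p v = range n := by
  constructor
  · exact h.DS_root v
  · intro e
    have hr : gregRoot (Sum.inl ⟨0, hn⟩ : Fin n ⊕ Fin m) := ⟨⟨0, hn⟩, rfl, rfl⟩
    rw [← h.DS_root _ hr] at e
    rwa [h.inj e]

theorem Rep.LF (h : Rep p) (hn : 0 < n) : LF n (Fam p) := by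
  have hr : gregRoot (Sum.inl ⟨0, hn⟩ : Fin n ⊕ Fin m) := ⟨⟨0, hn⟩, rfl, rfl⟩
  constructor
  · intro S hS
    obtain ⟨v, rfl⟩ := mem_Fam.1 hS
    exact DS_sub v
  · intro S hS
    obtain ⟨v, rfl⟩ := mem_Fam.1 hS
    exact h.ne v
  · exact mem_Fam.2 ⟨_, h.DS_root _ hr⟩
  · intro S hS h0
    obtain ⟨v, rfl⟩ := mem_Fam.1 hS
    have := (val_mem_DS (p := p) (i := ⟨0, hn⟩)).1 h0
    rw [h.eq_root hr this, h.DS_root _ hr]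
  · intro S hS T hT i hiS hiT
    obtain ⟨v, rfl⟩ := mem_Fam.1 hS
    obtain ⟨w, rfl⟩ := mem_Fam.1 hT
    obtain ⟨i, rfl, hi⟩ := mem_DS.1 hiS
    rcases desc_linear hi (val_mem_DS.1 hiT) with h1 | h1
    · left; exact DS_mono h1
    · right; exact DS_mono h1
  · intro i hi j hj H
    have h1 := (H _ (DS_mem_Fam (Sum.inl ⟨i, hi⟩))).1 (val_mem_DS.2 (desc_refl _))
    have h2 := (H _ (DS_mem_Fam (Sum.inl ⟨j, hj⟩))).2 (val_mem_DS.2 (desc_refl _))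
    have h3 := h.anti ((val_mem_DS (p := p) (i := ⟨j, hj⟩)).1 h1)
      ((val_mem_DS (p := p) (i := ⟨i, hi⟩)).1 h2)
    simpa using h3.symm

theorem ncard_fin (n : ℕ) (Q : ℕ → Prop) [DecidablePred Q] :
    {a : Fin n | Q a.val}.ncard = ((range n).filter Q).card := by
  rw [← Set.ncard_image_of_injective _ Fin.val_injective, ← Set.ncard_coe_finset]
  congr 1
  ext j
  simp only [Set.mem_image, Set.mem_setOf_eq, coe_filter, mem_range]
  constructor
  · rintro ⟨i, hi, rfl⟩; exact ⟨i.2, hi⟩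
  · rintro ⟨hj, hQ⟩; exact ⟨⟨j, hj⟩, hQ, rfl⟩

theorem beta_mem (h : Rep p) (a : Fin n ⊕ Fin m) : beta p a ∈ DS p a := by
  rw [beta_eq]
  exact Nat.sInf_mem (s := (DS p a : Set ℕ)) (h.ne a)

theorem beta_le {a : Fin n ⊕ Fin m} {j : ℕ} (hj : j ∈ DS p a) : beta p a ≤ j := by
  rw [beta_eq]
  exact Nat.sInf_le (s := (DS p a : Set ℕ)) hj

theorem beta_eq_iff (h : Rep p) {a : Fin n ⊕ Fin m} {i : ℕ} (hi : i ∈ DS p a) :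
    beta p a = i ↔ ∀ j ∈ DS p a, i ≤ j := by
  constructor
  · rintro rfl j hj; exact beta_le hj
  · intro H
    exact le_antisymm (beta_le hi) (H _ (beta_mem h a))

theorem Rep.impp (h : Rep p) : {a : Fin n | beta p (Sum.inl a) ≠ a.val}.ncard = fimpp n (Fam p) := by
  unfold fimpp
  rw [← ncard_fin]
  congr 1
  ext a
  simp only [Set.mem_setOf_eq]
  rw [Ne, beta_eq_iff h (val_mem_DS.2 (desc_refl _))]
  push Not
  constructor
  · rintro ⟨j, hj, hja⟩
    refine ⟨j, by simpa using hja, fun S hS haS => ?_⟩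
    obtain ⟨v, rfl⟩ := mem_Fam.1 hS
    exact DS_mono (val_mem_DS.1 haS) hj
  · rintro ⟨j, hj, H⟩
    exact ⟨j, H _ (DS_mem_Fam _) (val_mem_DS.2 (desc_refl _)), by simpa using hj⟩

theorem Rep.deg (h : Rep p) (hn : 0 < n) :
    {w : Fin n ⊕ Fin m | ¬gregRoot w ∧ gregRoot (p w)}.ncard = fdeg n (Fam p) := by
  unfold fdeg
  rw [← Set.ncard_image_of_injective _ h.inj, ← Set.ncard_coe_finset]
  congr 1
  ext S
  simp only [Set.mem_image, Set.mem_setOf_eq, coe_filter]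
  constructor
  · rintro ⟨w, ⟨h1, h2⟩, rfl⟩
    refine ⟨DS_mem_Fam w, by rwa [Ne, ← h.root_iff hn], fun T hT hwT => ?_⟩
    obtain ⟨v, rfl⟩ := mem_Fam.1 hT
    rw [← h.ord] at hwT
    rcases desc_cases hwT with rfl | h3
    · left; rfl
    · right; rw [h.eq_root h2 h3, h.DS_root _ h2]
  · rintro ⟨hS, hne, H⟩
    obtain ⟨w, rfl⟩ := mem_Fam.1 hS
    refine ⟨w, ⟨by rwa [h.root_iff hn], ?_⟩, rfl⟩
    rcases H _ (DS_mem_Fam (p w)) (DS_mono (desc_parent w)) with h1 | h1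
    · have h2 : p w = w := h.inj h1
      obtain ⟨k, hk⟩ := h.reach w
      rw [iterate_fixed h2] at hk
      rwa [h2]
    · rwa [h.root_iff hn]

theorem Rep.leading (h : Rep p) (hb : ∀ v, gregRoot (p^[n+m] v)) (i : Fin n) :
    beta p (p^[Nat.findGreatest
    (fun k => ∀ l ≤ k, ∀ j : Fin n, p^[l] (Sum.inl i) = Sum.inl j → i ≤ j)
    (n + m)] (Sum.inl i)) = i.val ↔ FLead (Fam p) i.val := by
  set P := fun k => ∀ l ≤ k, ∀ j : Fin n, p^[l] (Sum.inl i) = Sum.inl j → i ≤ j with hP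
  have hmem : ∀ k, i.val ∈ DS p (p^[k] (Sum.inl i)) := fun k => val_mem_DS.2 ⟨k, rfl⟩
  rw [beta_eq_iff h (hmem _)]
  have P0 : P 0 := by
    intro l hl j hj
    obtain rfl : l = 0 := by omega
    simp only [iterate_zero, id_eq, Sum.inl.injEq] at hj
    rw [hj]
  have step1 : (∀ j ∈ DS p (p^[Nat.findGreatest P (n + m)] (Sum.inl i)), i.val ≤ j) ↔
      ∀ k, P k → ∀ j ∈ DS p (p^[k] (Sum.inl i)), i.val ≤ j := by
    constructor
    · intro H k hk j hj
      by_cases hkn : k ≤ n + m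
      · have h1 := Nat.le_findGreatest hkn hk
        obtain ⟨d, hd⟩ := Nat.exists_eq_add_of_le h1
        apply H
        rw [hd, Nat.add_comm, iterate_add_apply]
        exact DS_mono ⟨d, rfl⟩ hj
      · obtain ⟨w, hw, e⟩ := hb (Sum.inl i)
        have := hk (n+m) (by omega) w e
        have : i.val ≤ w.val := this
        omega
    · intro H
      exact H _ (Nat.findGreatest_spec (Nat.zero_le _) P0)
  rw [step1]
  unfold FLead
  constructor
  · intro H S hS hiS hk
    obtain ⟨v, rfl⟩ := mem_Fam.1 hS
    obtain ⟨k, rfl⟩ := val_mem_DS.1 hiS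
    obtain ⟨j, hj, hji⟩ := hk
    have hnP : ¬ P k := fun hPk => by
      have := H k hPk j hj
      omega
    simp only [hP] at hnP
    push Not at hnP
    obtain ⟨l, hl, j, hj, hji⟩ := hnP
    refine ⟨j.val, ?_, hji, fun T hT hjT => ?_⟩
    · apply val_mem_DS.2
      rw [← hj]
      obtain ⟨d, rfl⟩ := Nat.exists_eq_add_of_le hl
      rw [Nat.add_comm, iterate_add_apply]
      exact ⟨d, rfl⟩
    · obtain ⟨v, rfl⟩ := mem_Fam.1 hT
      apply val_mem_DS.2
      apply Desc_trans _ (val_mem_DS.1 hjT)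
      rw [← hj]
      exact ⟨l, rfl⟩
  · intro H k hPk j hj
    by_contra hji
    obtain ⟨j', hj', hj'i, H'⟩ := H _ (DS_mem_Fam _) (hmem k) ⟨j, hj, by omega⟩
    obtain ⟨j', rfl, hd⟩ := mem_DS.1 hj'
    have h1 : Desc p (Sum.inl i) (Sum.inl j') :=
      val_mem_DS.1 (H' _ (DS_mem_Fam (Sum.inl j')) (val_mem_DS.2 (desc_refl _)))
    obtain ⟨l, hl⟩ := h1
    have : ∃ l ≤ k, p^[l] (Sum.inl i) = Sum.inl j' := by
      rcases Nat.le_total l k with h2 | h2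
      · exact ⟨l, h2, hl⟩
      · refine ⟨k, le_rfl, ?_⟩
        apply h.anti _ hd
        rw [← hl]
        obtain ⟨d, rfl⟩ := Nat.exists_eq_add_of_le h2
        rw [Nat.add_comm, iterate_add_apply]
        exact ⟨d, rfl⟩
    obtain ⟨l, hlk, hl⟩ := this
    have := hPk l hlk j' hl
    have : i.val ≤ j'.val := this
    omega

/-- the depth is the number of strict supersets -/
theorem Rep.depth_spec (h : Rep p) (hn : 0 < n) (v : Fin n ⊕ Fin m) :
    depth p v = ((Fam p).filter fun T => DS p v ⊂ T).card := by
  have key : ∀ k v, gregRoot (p^[k] v) → (∀ l < k, ¬ gregRoot (p^[l] v)) →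
      ((Fam p).filter fun T => DS p v ⊂ T).card = k := by
    intro k
    induction k with
    | zero =>
      intro v hv _
      rw [card_eq_zero, filter_eq_empty_iff]
      intro T hT hlt
      obtain ⟨w, rfl⟩ := mem_Fam.1 hT
      have hv' : gregRoot v := hv
      rw [h.DS_root v hv'] at hlt
      exact hlt.2 (DS_sub w)
    | succ k ih =>
      intro v hv hl
      have h1 := ih (p v) hv (fun l hlk hr => hl (l+1) (by omega) hr)
      have h0 : ¬ gregRoot v := hl 0 (by omega)
      have hne : p v ≠ v := by
        intro e
        rw [iterate_fixed e] at hv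
        exact h0 hv
      have hlt : DS p v ⊂ DS p (p v) := by
        refine ⟨DS_mono (desc_parent v), fun hs => hne ?_⟩
        exact h.anti ((h.ord _ _).2 hs) (desc_parent v)
      have : ((Fam p).filter fun T => DS p v ⊂ T) =
          insert (DS p (p v)) ((Fam p).filter fun T => DS p (p v) ⊂ T) := by
        ext T
        simp only [mem_filter, mem_insert]
        constructor
        · rintro ⟨hT, hs⟩
          obtain ⟨w, rfl⟩ := mem_Fam.1 hT
          have hd := (h.ord v w).2 hs.1
          rcases desc_cases hd with rfl | hd
          · exact absurd hs (ssubset_irrefl _)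
          · by_cases e : p v = w
            · left; rw [e]
            · right
              refine ⟨hT, DS_mono hd, fun hs' => e ?_⟩
              exact h.anti hd ((h.ord _ _).2 hs')
        · rintro (rfl | ⟨hT, hs⟩)
          · exact ⟨DS_mem_Fam _, hlt⟩
          · exact ⟨hT, hlt.trans hs⟩
      rw [this, card_insert_of_notMem (by simp), h1]
  unfold depth
  rw [key (sInf {k : ℕ | gregRoot (p^[k] v)}) v]
  · exact Nat.sInf_mem (s := {k : ℕ | gregRoot (p^[k] v)}) (h.reach v)
  · intro l hl hr
    exact absurd (Nat.sInf_le (s := {k : ℕ | gregRoot (p^[k] v)}) hr) (by omega)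

/-- the sorting key on sets -/
def KF (F : Finset (Finset ℕ)) (S : Finset ℕ) : ℕ :=
  sInf (S : Set ℕ) * (F.card + 1) + (F.filter fun T => S ⊂ T).card

theorem Rep.key_eq (h : Rep p) (hn : 0 < n) (u : Fin m) : key p u = KF (Fam p) (DS p (Sum.inr u)) := by
  unfold key KF
  rw [h.depth_spec hn, beta_eq, h.card_Fam]

end raw

end GregAux

namespace GregAux
open Finset
open GregRaw

theorem KF_inj {N : ℕ} {F : Finset (Finset ℕ)} (h : LF N F) {S T : Finset ℕ} (hS : S ∈ F)
    (hT : T ∈ F) (e : KF F S = KF F T) : S = T := by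
  unfold KF at e
  have l1 := card_filter_le F (fun T => S ⊂ T)
  have l2 := card_filter_le F (fun T' => T ⊂ T')
  have mS : sInf (S : Set ℕ) ∈ S := Nat.sInf_mem (s := (S : Set ℕ)) (h.ne S hS)
  have mT : sInf (T : Set ℕ) ∈ T := Nat.sInf_mem (s := (T : Set ℕ)) (h.ne T hT)
  have e1 : sInf (S : Set ℕ) = sInf (T : Set ℕ) := by
    have := congrArg (fun x => x / (F.card + 1)) e
    rwa [Nat.mul_comm, Nat.mul_add_div (by omega), Nat.div_eq_of_lt (by omega), Nat.mul_comm,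
      Nat.mul_add_div (by omega), Nat.div_eq_of_lt (by omega)] at this
  have e2 : (F.filter fun T => S ⊂ T).card = (F.filter fun T' => T ⊂ T').card := by
    rw [e1] at e; omega
  have aux : ∀ S T : Finset ℕ, T ∈ F → S ⊂ T →
      (F.filter fun T' => T ⊂ T').card < (F.filter fun T => S ⊂ T).card := by
    intro S T hT hST
    apply card_lt_card
    rw [ssubset_iff_of_subset]
    · exact ⟨T, by simp [hT, hST], by simp⟩
    · intro X hX
      rw [mem_filter] at hX ⊢
      exact ⟨hX.1, hST.trans hX.2⟩
  by_contra hne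
  rcases h.lam S hS T hT _ mS (e1 ▸ mT) with h1 | h1
  · have := aux S T hT (h1.ssubset_of_ne hne)
    omega
  · have := aux T S hS (h1.ssubset_of_ne (Ne.symm hne))
    omega

theorem raw_inj {n m : ℕ} (hn : 0 < n) {p q : Fin n ⊕ Fin m → Fin n ⊕ Fin m}
    (hp : GregCond n m p) (hq : GregCond n m q) (e : Fam p = Fam q) : p = q := by
  have rp := GregCond.rep hp
  have rq := GregCond.rep hq
  have key1 : ∀ (p q : Fin n ⊕ Fin m → Fin n ⊕ Fin m), Fam p = Fam q → ∀ i,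
      DS q (Sum.inl i) ⊆ DS p (Sum.inl i) := by
    intro p q e i
    have h1 : DS p (Sum.inl i) ∈ Fam q := e ▸ DS_mem_Fam _
    obtain ⟨w, hw⟩ := mem_Fam.1 h1
    rw [← hw]
    apply DS_mono
    rw [← val_mem_DS, hw, val_mem_DS]
    exact desc_refl _
  have hl : ∀ i, DS p (Sum.inl i) = DS q (Sum.inl i) := fun i =>
    Subset.antisymm (key1 q p e.symm i) (key1 p q e i)
  have hr : ∀ (p q : Fin n ⊕ Fin m → Fin n ⊕ Fin m), Rep p → Fam p = Fam q →
      (∀ i, DS p (Sum.inl i) = DS q (Sum.inl i)) →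
      ∀ u : Fin m, ∃ w : Fin m, DS q (Sum.inr w) = DS p (Sum.inr u) := by
    intro p q hp e hl u
    have h1 : DS p (Sum.inr u) ∈ Fam q := e ▸ DS_mem_Fam _
    obtain ⟨w, hw⟩ := mem_Fam.1 h1
    rcases w with i | w
    · rw [← hl] at hw
      have := hp.inj hw
      simp at this
    · exact ⟨w, hw⟩
  have mp : StrictMono (key p) := fun u w h => (hp.2.2.2 u w).1 h
  have mq : StrictMono (key q) := fun u w h => (hq.2.2.2 u w).1 h
  have hk : key p = key q := by
    rw [← mp.range_inj mq]
    ext x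
    constructor
    · rintro ⟨u, rfl⟩
      obtain ⟨w, hw⟩ := hr p q rp e hl u
      exact ⟨w, by rw [rp.key_eq hn, rq.key_eq hn, hw, e]⟩
    · rintro ⟨u, rfl⟩
      obtain ⟨w, hw⟩ := hr q p rq e.symm (fun i => (hl i).symm) u
      exact ⟨w, by rw [rp.key_eq hn, rq.key_eq hn, hw, e]⟩
  have hD : DS p = DS q := by
    funext v
    rcases v with i | u
    · exact hl i
    · obtain ⟨w, hw⟩ := hr p q rp e hl u
      have : key q w = key q u := by
        rw [← hk, rp.key_eq hn u, hk, rq.key_eq hn, hw, e]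
      rw [← hw, mq.injective this]
  have hsub : ∀ (p q : Fin n ⊕ Fin m → Fin n ⊕ Fin m), Rep p → Rep q → DS p = DS q →
      ∀ v, ¬ gregRoot v → DS p (p v) ⊆ DS p (q v) := by
    intro p q hp hq e v hv
    have h1 : Desc p v (q v) := by
      rw [hp.ord, e, ← hq.ord]; exact desc_parent v
    rcases desc_cases h1 with h2 | h2
    · exfalso
      obtain ⟨k, hk⟩ := hq.reach v
      rw [iterate_fixed h2.symm] at hk
      exact hv hk
    · exact DS_mono h2
  funext v
  by_cases hv : gregRoot v
  · rw [rp.fix v hv, rq.fix v hv]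
  · apply rp.inj
    apply Subset.antisymm (hsub p q rp rq hD v hv)
    rw [hD]
    exact hsub q p rq rp hD.symm v hv

theorem raw_surj {n m : ℕ} {F : Finset (Finset ℕ)} (h : LF n F) (hm : F.card = n + m) :
    ∃ p : Fin n ⊕ Fin m → Fin n ⊕ Fin m, GregCond n m p ∧ Fam p = F := by
  classical
  have hn := h.one_le
  choose! D hD using fun i (hi : i < n) => h.exists_min hi
  have hc := h.card_lab
  have hc2 := card_filter_add_card_filter_not (s := F) (Lab F)
  set U := F.filter fun S => ¬ Lab F S with hU
  have hUF : ∀ S ∈ U, S ∈ F := fun S hS => (mem_filter.1 hS).1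
  have hUc : (U.image (KF F)).card = m := by
    rw [card_image_of_injOn]
    · omega
    · intro S hS T hT e
      exact KF_inj h (hUF S hS) (hUF T hT) e
  set o := (U.image (KF F)).orderEmbOfFin hUc with ho
  have hom : ∀ u, ∃ S ∈ U, KF F S = o u := by
    intro u
    have := orderEmbOfFin_mem (U.image (KF F)) hUc u
    rwa [mem_image] at this
  choose e heU he using hom
  have hmono : StrictMono fun u => KF F (e u) := by
    intro u w huw
    simp only [he]
    exact o.strictMono huw
  have hsurj : ∀ S ∈ U, ∃ u, e u = S := by
    intro S hS
    have h1 : KF F S ∈ Set.range o := by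
      rw [ho, range_orderEmbOfFin]
      exact mem_coe.2 (mem_image_of_mem _ hS)
    obtain ⟨u, hu⟩ := h1
    exact ⟨u, KF_inj h (hUF _ (heU u)) (hUF S hS) (by rw [he, hu])⟩
  set DF : Fin n ⊕ Fin m → Finset ℕ := Sum.elim (fun i => D i.val) e with hDF
  have DFF : ∀ v, DF v ∈ F := by
    rintro (i | u)
    · exact (hD i i.2).1
    · exact hUF _ (heU u)
  have DFlab : ∀ i : Fin n, Lab F (DF (Sum.inl i)) := fun i => ⟨i.val, (hD i i.2).2⟩
  have DFunl : ∀ u : Fin m, ¬ Lab F (DF (Sum.inr u)) := fun u => (mem_filter.1 (heU u)).2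
  have DFsurj : ∀ S ∈ F, ∃ v, DF v = S := by
    intro S hS
    by_cases hl : Lab F S
    · obtain ⟨i, hi, hmin⟩ := hl
      have hin : i < n := by simpa using h.sub S hS hi
      exact ⟨Sum.inl ⟨i, hin⟩, Subset.antisymm ((hD i hin).2.2 S hS hi)
        (hmin _ (hD i hin).1 (hD i hin).2.1)⟩
    · obtain ⟨u, hu⟩ := hsurj S (mem_filter.2 ⟨hS, hl⟩)
      exact ⟨Sum.inr u, hu⟩
  have DFinj : Injective DF := by
    rintro (i | u) (j | w) hvw
    · congr 1
      ext
      apply h.sep i i.2 j j.2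
      have h1 : D i.val = D j.val := hvw
      intro S hS
      exact ⟨fun hh => (hD i i.2).2.2 S hS hh (h1 ▸ (hD j j.2).2.1),
        fun hh => (hD j j.2).2.2 S hS hh (h1 ▸ (hD i i.2).2.1)⟩
    · exact absurd (hvw ▸ DFlab i) (DFunl w)
    · exact absurd (hvw ▸ DFlab j) (DFunl u)
    · congr 1
      apply hmono.injective
      have h1 : e u = e w := hvw
      simp only [h1]
  have hpar : ∀ v, ∃ w, DF v ≠ range n → DF v ⊂ DF w ∧ ∀ T ∈ F, DF v ⊂ T → DF w ⊆ T := by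
    intro v
    by_cases hv : DF v = range n
    · exact ⟨v, fun h => absurd hv h⟩
    · obtain ⟨S, hS, hmin⟩ := (F.filter fun T => DF v ⊂ T).exists_min_image card
        ⟨range n, mem_filter.2 ⟨h.top, (h.sub _ (DFF v)).ssubset_of_ne hv⟩⟩
      rw [mem_filter] at hS
      obtain ⟨w, rfl⟩ := DFsurj S hS.1
      refine ⟨w, fun _ => ⟨hS.2, fun T hT hvT => ?_⟩⟩
      obtain ⟨s, hs⟩ := h.ne _ (DFF v)
      rcases h.lam _ (DFF w) T hT s (hS.2.1 hs) (hvT.1 hs) with h1 | h1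
      · exact h1
      · rw [eq_of_subset_of_card_le h1 (hmin T (mem_filter.2 ⟨hT, hvT⟩))]
  choose par hpar using hpar
  set p : Fin n ⊕ Fin m → Fin n ⊕ Fin m := fun v => if DF v = range n then v else par v with hp
  have hps : ∀ v, DF v ⊆ DF (p v) := by
    intro v
    simp only [hp]
    split_ifs with c
    · exact Subset.rfl
    · exact (hpar v c).1.1
  have hdesc : ∀ v a, Desc p v a ↔ DF v ⊆ DF a := by
    intro v a
    constructor
    · rintro ⟨k, rfl⟩
      induction k with
      | zero => exact Subset.rfl
      | succ k ih =>
        rw [iterate_succ_apply']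
        exact ih.trans (hps _)
    · intro hsub
      obtain ⟨d, hd⟩ : ∃ d, (DF a).card ≤ (DF v).card + d := ⟨(DF a).card, by omega⟩
      induction d generalizing v with
      | zero =>
        rw [DFinj (eq_of_subset_of_card_le hsub hd)]
        exact desc_refl _
      | succ d ih =>
        by_cases e : DF v = DF a
        · rw [DFinj e]; exact desc_refl _
        have hlt := hsub.ssubset_of_ne e
        have hv : DF v ≠ range n := by
          intro hv
          rw [hv] at hlt
          exact hlt.2 (h.sub _ (DFF a))
        have hpv : p v = par v := by simp [hp, hv]
        obtain ⟨h1, h2⟩ := hpar v hv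
        rw [← hpv] at h1 h2
        apply Desc_trans (desc_parent v)
        apply ih _ (h2 _ (DFF a) hlt)
        have := card_lt_card h1
        omega
  have hDS : ∀ v, DS p v = DF v := by
    intro v
    ext j
    rw [mem_DS]
    constructor
    · rintro ⟨i, rfl, hi⟩
      exact (hdesc _ _).1 hi (hD i i.2).2.1
    · intro hj
      have hjn : j < n := by simpa using h.sub _ (DFF v) hj
      exact ⟨⟨j, hjn⟩, rfl, (hdesc _ _).2 ((hD j hjn).2.2 _ (DFF v) hj)⟩
  have hFam : Fam p = F := by
    ext S
    rw [mem_Fam]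
    constructor
    · rintro ⟨v, rfl⟩; rw [hDS]; exact DFF v
    · intro hS
      obtain ⟨v, hv⟩ := DFsurj S hS
      exact ⟨v, by rw [hDS, hv]⟩
  have hroot0 : DF (Sum.inl ⟨0, hn⟩) = range n := h.root _ (DFF _) (hD 0 hn).2.1
  have hroot : ∀ v, gregRoot v ↔ DF v = range n := by
    intro v
    constructor
    · rintro ⟨w, hw, rfl⟩
      have : w = ⟨0, hn⟩ := Fin.ext hw
      rw [this, hroot0]
    · intro hv
      rw [← hroot0] at hv
      exact ⟨⟨0, hn⟩, rfl, DFinj hv⟩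
  have rep : Rep p := by
    refine ⟨?_, ?_, ?_, ?_⟩
    · intro v hv
      simp [hp, (hroot v).1 hv]
    · intro v
      have : Desc p v (Sum.inl ⟨0, hn⟩) := by
        rw [hdesc, hroot0]; exact h.sub _ (DFF v)
      obtain ⟨k, hk⟩ := this
      exact ⟨k, hk ▸ ⟨⟨0, hn⟩, rfl, rfl⟩⟩
    · intro v a
      rw [hdesc, hDS, hDS]
    · intro v
      rw [hDS]; exact h.ne _ (DFF v)
  refine ⟨p, ⟨rep.fix, ?_, ?_, ?_⟩, hFam⟩
  · intro v
    refine ⟨depth p v, ?_, Nat.sInf_mem (s := {k : ℕ | gregRoot (p^[k] v)}) (rep.reach v)⟩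
    rw [rep.depth_spec hn, ← rep.card_Fam]
    apply card_lt_card
    rw [ssubset_iff_of_subset (filter_subset _ _)]
    exact ⟨DS p v, DS_mem_Fam v, by simp⟩
  · intro u
    have hchild : ∀ i ∈ DF (Sum.inr u), ∃ c ∈ children p (Sum.inr u), i ∈ DF c := by
      intro i hi
      have hin : i < n := by simpa using h.sub _ (DFF _) hi
      have hd : Desc p (Sum.inl ⟨i, hin⟩) (Sum.inr u) := by
        rw [← val_mem_DS, hDS]; exact hi
      obtain ⟨c, hc1, hc2, hc3⟩ := desc_child hd (by simp)
      refine ⟨c, ⟨hc1, hc2⟩, ?_⟩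
      rw [← val_mem_DS, hDS] at hc3
      exact hc3
    obtain ⟨i, hi⟩ := h.ne _ (DFF (Sum.inr u))
    obtain ⟨c, hc, hic⟩ := hchild i hi
    have : ¬ DF (Sum.inr u) ⊆ DF c := by
      intro hs
      have h1 : Desc p c (Sum.inr u) := hc.2 ▸ desc_parent c
      exact hc.1 (rep.anti h1 ((hdesc _ _).2 hs))
    rw [Finset.not_subset] at this
    obtain ⟨j, hj, hjc⟩ := this
    obtain ⟨c', hc', hjc'⟩ := hchild j hj
    have : 1 < (children p (Sum.inr u)).ncard := by
      rw [Set.one_lt_ncard]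
      exact ⟨c, hc, c', hc', fun e => hjc (e ▸ hjc')⟩
    exact this
  · intro u w
    rw [rep.key_eq hn, rep.key_eq hn, hFam, hDS, hDS]
    exact hmono.lt_iff_lt.symm

theorem sum_gregTree (N : ℕ) (hN : 0 < N) :
    ∑ T : GregTree N, (X 1 : MvPolynomial (Fin 4) ℚ) ^ T.unl * X 3 ^ T.impp * X 0 ^ (T.degRoot - 1)
        * X 2 ^ (T.lead - T.degRoot - 1) = ∑ F ∈ Fams N, wt N F := by
  refine sum_bij (fun T _ => Fam T.2.1) ?_ ?_ ?_ ?_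
  · intro T _
    exact mem_Fams.2 ((GregCond.rep T.2.2).LF hN)
  · rintro ⟨m, p, hp⟩ _ ⟨m', q, hq⟩ _ e
    have hm : m = m' := by
      have h1 := (GregCond.rep hp).card_Fam
      have h2 := (GregCond.rep hq).card_Fam
      simp only at e
      rw [e] at h1
      ext
      omega
    subst hm
    have := raw_inj hN hp hq e
    subst this
    rfl
  · intro F hF
    rw [mem_Fams] at hF
    have h1 := hF.card_le
    have h2 := hF.le_card
    obtain ⟨p, hp, e⟩ := raw_surj (m := F.card - N) hF (by omega)
    exact ⟨⟨⟨F.card - N, by omega⟩, p, hp⟩, mem_univ _, e⟩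
  · rintro ⟨m, p, hp⟩ _
    have rep := GregCond.rep hp
    have e1 : GregTree.unl ⟨m, p, hp⟩ = (Fam p).card - N := by
      rw [rep.card_Fam]; simp [GregTree.unl]
    have e2 : GregTree.impp ⟨m, p, hp⟩ = fimpp N (Fam p) := rep.impp
    have e3 : GregTree.degRoot ⟨m, p, hp⟩ = fdeg N (Fam p) := rep.deg hN
    have e4 : GregTree.lead ⟨m, p, hp⟩ = flead N (Fam p) := by
      unfold GregTree.lead flead
      rw [← ncard_fin]
      congr 1
      ext i
      apply rep.leading
      intro v
      obtain ⟨k, hk, hr⟩ := hp.2.1 v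
      exact root_of_le rep.fix hk.le hr
    simp only [wt]
    rw [e1, e2, e3, e4]

end GregAux

/-- For every `n ≥ 1`,
`R_n(x,y,z,t) = Σ_{T ∈ G_{n+1}} y^{unl T} t^{impp T} x^{deg_T(1)-1} z^{lead T - deg_T(1) - 1}`. -/
theorem Rpoly_eq_sum_gregTree (n : ℕ) (hn : 1 ≤ n) :
    Rpoly n = ∑ T : GregTree (n + 1),
      (X 1 : MvPolynomial (Fin 4) ℚ) ^ T.unl * X 3 ^ T.impp * X 0 ^ (T.degRoot - 1)
        * X 2 ^ (T.lead - T.degRoot - 1) := by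
  obtain ⟨k, rfl⟩ : ∃ k, n = k + 1 := ⟨n - 1, by omega⟩
  rw [GregAux.sum_gregTree _ (by omega)]
  exact GregAux.Rpoly_eq_sum_Fams k
end
end

section
/- For every n ≥ 1, R_n(x,y,z,t) = Σ_{T ∈ C_{n+1}} (y+1)^{impe(T)-impp(T)} (y+t)^{impp(T)} x^{deg_T(1)-1} z^{lead(T)-deg_T(1)-1}, where the sum is over all Cayley trees of size n+1 rooted at 1. -/
noncomputable section

open MvPolynomial Function

/-! ### Auxiliary material for the proof -/

namespace CTaux

/-- reachability under iteration -/
def D {α : Type*} (p : α → α) (x a : α) : Prop := ∃ k, p^[k] x = a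

section D
variable {α : Type*} {p : α → α}

lemma D.refl (x : α) : D p x x := ⟨0, rfl⟩

lemma D.head {x a : α} (h : D p (p x) a) : D p x a := by
  obtain ⟨k, hk⟩ := h
  exact ⟨k + 1, by simpa [Function.iterate_succ_apply] using hk⟩

lemma D.cases {x a : α} (h : D p x a) : x = a ∨ D p (p x) a := by
  obtain ⟨k, hk⟩ := h
  cases k with
  | zero => exact Or.inl hk
  | succ k => exact Or.inr ⟨k, by simpa [Function.iterate_succ_apply] using hk⟩

lemma D.trans {x a b : α} (h : D p x a) (h' : D p a b) : D p x b := by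
  obtain ⟨k, rfl⟩ := h
  obtain ⟨l, rfl⟩ := h'
  exact ⟨l + k, by rw [Function.iterate_add_apply]⟩

lemma D.step (x : α) : D p x (p x) := D.head (D.refl _)

lemma D.cases_tail {x a : α} (h : D p x a) : x = a ∨ ∃ d, p d = a ∧ D p x d := by
  obtain ⟨k, hk⟩ := h
  cases k with
  | zero => exact Or.inl hk
  | succ k => exact Or.inr ⟨p^[k] x, by simpa [Function.iterate_succ_apply'] using hk, k, rfl⟩

lemma D.ind {a : α} {motive : α → Prop} (h0 : motive a)
    (hs : ∀ x, D p (p x) a → motive (p x) → motive x) {x : α} (h : D p x a) : motive x := by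
  obtain ⟨k, hk⟩ := h
  induction k generalizing x with
  | zero => cases hk; exact h0
  | succ k ih =>
    rw [Function.iterate_succ_apply] at hk
    exact hs x ⟨k, hk⟩ (ih hk)

lemma D.total {x a b : α} (h : D p x a) (h' : D p x b) : D p a b ∨ D p b a := by
  obtain ⟨k, rfl⟩ := h
  obtain ⟨l, rfl⟩ := h'
  rcases le_total k l with hkl | hkl
  · left
    exact ⟨l - k, by rw [← Function.iterate_add_apply]; congr 2; omega⟩
  · right
    exact ⟨k - l, by rw [← Function.iterate_add_apply]; congr 2; omega⟩

lemma D.of_step {β : Type*} {q : β → β} (φ : α → β) (h : ∀ u, D q (φ u) (φ (p u)))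
    {x a : α} (hx : D p x a) : D q (φ x) (φ a) :=
  D.ind (p := p) (motive := fun x => D q (φ x) (φ a)) (D.refl _)
    (fun x _ hm => (h x).trans hm) hx

end D

/-- vertices on the greater ancestors path of `i` -/
inductive Up {α : Type*} [LE α] (p : α → α) (i : α) : α → Prop
  | refl : Up p i i
  | step (a : α) : Up p i a → i ≤ p a → Up p i (p a)

lemma up_iff {α : Type*} [PartialOrder α] (p : α → α) (i a : α) :
    Up p i a ↔ ∃ k, p^[k] i = a ∧ ∀ l ≤ k, i ≤ p^[l] i := by
  constructor
  · intro h
    induction h with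
    | refl => exact ⟨0, rfl, by intro l hl; obtain rfl : l = 0 := by omega
                                exact le_refl _⟩
    | step a _ hle ih =>
      obtain ⟨k, rfl, hk⟩ := ih
      refine ⟨k + 1, by rw [Function.iterate_succ_apply'], ?_⟩
      intro l hl
      rcases Nat.lt_or_ge l (k + 1) with h | h
      · exact hk l (by omega)
      · obtain rfl : l = k + 1 := by omega
        rw [Function.iterate_succ_apply']; exact hle
  · rintro ⟨k, rfl, hk⟩
    induction k with
    | zero => exact Up.refl
    | succ k ih =>
      have := Up.step _ (ih (fun l hl => hk l (by omega)))
        (by have := hk (k + 1) le_rfl; rwa [Function.iterate_succ_apply'] at this)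
      rwa [Function.iterate_succ_apply']

/-! ### Tree condition -/

/-- being a tree, without the bound -/
def IsT {n : ℕ} (p : Fin (n + 1) → Fin (n + 1)) : Prop := p 0 = 0 ∧ ∀ v, D p v 0

lemma iter_zero {n : ℕ} {p : Fin (n + 1) → Fin (n + 1)} (h0 : p 0 = 0) {v : Fin (n + 1)} {k l : ℕ}
    (hk : p^[k] v = 0) (hl : k ≤ l) : p^[l] v = 0 := by
  obtain ⟨m, rfl⟩ := Nat.exists_eq_add_of_le hl
  rw [add_comm k m, Function.iterate_add_apply, hk]
  exact Function.iterate_fixed h0 m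

lemma isT_iff {n : ℕ} (p : Fin (n + 1) → Fin (n + 1)) :
    ((∀ v, v.val = 0 → p v = v) ∧ ∀ v, ∃ k, k < n + 1 ∧ (p^[k] v).val = 0) ↔ IsT p := by
  constructor
  · rintro ⟨h1, h2⟩
    refine ⟨h1 0 rfl, fun v => ?_⟩
    obtain ⟨k, _, hk⟩ := h2 v
    exact ⟨k, Fin.ext hk⟩
  · rintro ⟨h1, h2⟩
    refine ⟨fun v hv => ?_, fun v => ?_⟩
    · obtain rfl : v = 0 := Fin.ext hv
      exact h1
    · classical
      have hex : ∃ k, p^[k] v = 0 := h2 v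
      refine ⟨Nat.find hex, ?_, by rw [Nat.find_spec hex]; rfl⟩
      have hinj : Function.Injective
          (fun i : Fin (Nat.find hex + 1) => p^[i.val] v) := by
        have key : ∀ i j : ℕ, i < j → j ≤ Nat.find hex → p^[i] v ≠ p^[j] v := by
          intro i j hij hj he
          have := Nat.find_spec hex
          have h3 : p^[Nat.find hex - j + i] v = 0 := by
            rw [Function.iterate_add_apply, he, ← Function.iterate_add_apply]
            rw [Nat.sub_add_cancel hj]; exact this
          exact Nat.find_min hex (by omega) h3
        intro i j hij
        by_contra hne
        rcases lt_or_gt_of_ne (fun h => hne (Fin.ext h) : i.val ≠ j.val) with h | h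
        · exact key _ _ h (by omega) hij
        · exact key _ _ h (by omega) hij.symm
      have := Fintype.card_le_of_injective _ hinj
      simp only [Fintype.card_fin] at this
      omega

/-- build a tree -/
def mkT {n : ℕ} (p : Fin (n + 1) → Fin (n + 1)) (h : IsT p) : CayleyTree (n + 1) :=
  ⟨p, (isT_iff p).2 h⟩

lemma isT {n : ℕ} (T : CayleyTree (n + 1)) : IsT T.1 := (isT_iff _).1 T.2

lemma IsT.periodic {n : ℕ} {p : Fin (n + 1) → Fin (n + 1)} (h : IsT p) {x : Fin (n + 1)} {m : ℕ}
    (hm : 1 ≤ m) (hx : p^[m] x = x) : x = 0 := by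
  obtain ⟨k, hk⟩ := h.2 x
  have h1 : p^[m * k] x = x := by
    rw [Function.iterate_mul]; exact Function.iterate_fixed hx k
  rw [← h1]
  exact iter_zero h.1 hk (Nat.le_mul_of_pos_left k hm)

lemma IsT.ne {n : ℕ} {p : Fin (n + 1) → Fin (n + 1)} (h : IsT p) {x : Fin (n + 1)}
    (hx : x ≠ 0) : p x ≠ x := fun he => hx (h.periodic (m := 1) le_rfl he)

lemma IsT.child_unique {n : ℕ} {p : Fin (n + 1) → Fin (n + 1)} (h : IsT p)
    {c c' w : Fin (n + 1)} (hc : p c ≠ 0) (he : p c = p c') (h1 : D p w c) (h2 : D p w c') :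
    c = c' := by
  have key : ∀ c c' : Fin (n + 1), p c ≠ 0 → p c = p c' → D p c c' → c = c' := by
    intro c c' hc he hD
    rcases hD.cases with h3 | ⟨k, hk⟩
    · exact h3
    · exfalso
      apply hc
      apply h.periodic (m := k + 1) (by omega)
      rw [Function.iterate_succ_apply', hk, he]
  rcases h1.total h2 with h3 | h3
  · exact key _ _ hc he h3
  · exact (key _ _ (he ▸ hc) he.symm h3).symm

/-! ### Statistics -/

section stats
variable {n : ℕ} (T : CayleyTree (n + 1))

lemma beta_le {w a : Fin (n + 1)} (h : D T.1 w a) : T.beta a ≤ w.val :=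
  Nat.sInf_le ⟨w, rfl, h⟩

lemma beta_spec (a : Fin (n + 1)) : ∃ w : Fin (n + 1), w.val = T.beta a ∧ D T.1 w a :=
  Nat.sInf_mem (s := {j : ℕ | ∃ v : Fin (n + 1), v.val = j ∧ T.Desc v a}) ⟨a.val, a, rfl, D.refl a⟩

lemma beta_inj {c c' : Fin (n + 1)} (hc : T.1 c ≠ 0) (he : T.1 c = T.1 c')
    (hb : T.beta c = T.beta c') : c = c' := by
  obtain ⟨w, hw, h1⟩ := beta_spec T c
  obtain ⟨w', hw', h2⟩ := beta_spec T c'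
  obtain rfl : w = w' := Fin.ext (by omega)
  exact (isT T).child_unique hc he h1 h2

lemma beta_lt_iff {a : Fin (n + 1)} {m : ℕ} :
    T.beta a < m ↔ ∃ w : Fin (n + 1), D T.1 w a ∧ w.val < m := by
  constructor
  · intro h
    obtain ⟨w, hw, h1⟩ := beta_spec T a
    exact ⟨w, h1, by omega⟩
  · rintro ⟨w, h1, h2⟩
    exact lt_of_le_of_lt (beta_le T h1) h2

lemma improper_iff (c : Fin (n + 1)) :
    T.ImproperEdge c ↔ ∃ w, D T.1 w c ∧ w < T.1 c := by
  unfold CayleyTree.ImproperEdge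
  rw [beta_lt_iff]
  constructor
  · rintro ⟨_, h⟩; exact h
  · rintro ⟨w, h1, h2⟩
    refine ⟨fun h => ?_, w, h1, h2⟩
    obtain rfl : c = 0 := Fin.ext h
    rw [(isT T).1] at h2
    exact absurd h2 (Fin.not_lt_zero _)

lemma improperParent_iff (a : Fin (n + 1)) :
    T.ImproperParent a ↔ ∃ w, D T.1 w a ∧ w < a := by
  unfold CayleyTree.ImproperParent
  have := beta_le T (D.refl a)
  rw [← lt_iff_le_and_ne.trans (and_iff_right this), beta_lt_iff]
  rfl

lemma improperParent_iff' (a : Fin (n + 1)) :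
    T.ImproperParent a ↔ ∃ c, T.ImproperEdge c ∧ T.1 c = a := by
  rw [improperParent_iff]
  constructor
  · rintro ⟨w, h1, h2⟩
    rcases h1.cases_tail with rfl | ⟨d, rfl, h3⟩
    · exact absurd h2 (lt_irrefl _)
    · exact ⟨d, (improper_iff T d).2 ⟨w, h3, h2⟩, rfl⟩
  · rintro ⟨c, h1, rfl⟩
    obtain ⟨w, h2, h3⟩ := (improper_iff T c).1 h1
    exact ⟨w, h2.trans (D.step c), h3⟩

lemma leading_iff (i : Fin (n + 1)) :
    T.Leading i ↔ ¬ ∃ a w, Up T.1 i a ∧ D T.1 w a ∧ w < i := by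
  classical
  unfold CayleyTree.Leading
  have hP : ∀ l ≤ T.bapLen i, i ≤ T.1^[l] i := by
    unfold CayleyTree.bapLen
    exact Nat.findGreatest_spec (P := fun k => ∀ l ≤ k, i ≤ T.1^[l] i) (m := 0) (Nat.zero_le _)
      (by intro l hl; obtain rfl : l = 0 := by omega
          exact le_refl _)
  have hle := beta_le T (show D T.1 i (T.1^[T.bapLen i] i) from ⟨_, rfl⟩)
  constructor
  · rintro hb ⟨a, w, hU, hD, hw⟩
    obtain ⟨k, rfl, hk⟩ := (up_iff _ _ _).1 hU
    have key : D T.1 (T.1^[k] i) (T.1^[T.bapLen i] i) := by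
      by_cases h : k ≤ T.bapLen i
      · exact ⟨T.bapLen i - k, by rw [← Function.iterate_add_apply, Nat.sub_add_cancel h]⟩
      · have h2 : ∀ m ≤ n + 1, m ≤ k → m ≤ T.bapLen i := by
          intro m hm hmk
          exact Nat.le_findGreatest hm (fun l hl => hk l (by omega))
        have h3 : n + 1 ≤ T.bapLen i := by
          rcases Nat.lt_or_ge k (n + 1) with h4 | h4
          · exact absurd (h2 k h4.le le_rfl) h
          · exact h2 _ le_rfl h4
        obtain ⟨m, hm, hm0⟩ := T.2.2 i
        have hm0 : T.1^[m] i = 0 := Fin.ext hm0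
        rw [iter_zero (isT T).1 hm0 (by omega : m ≤ k),
          iter_zero (isT T).1 hm0 (by omega : m ≤ T.bapLen i)]
        exact D.refl _
    have := beta_le T (hD.trans key)
    have hw : w.val < i.val := hw
    omega
  · intro h
    by_contra hne
    have hlt : T.beta (T.1^[T.bapLen i] i) < i.val := lt_of_le_of_ne hle hne
    obtain ⟨w, h1, h2⟩ := (beta_lt_iff T).1 hlt
    exact h ⟨_, w, (up_iff _ _ _).2 ⟨_, rfl, hP⟩, h1, h2⟩

lemma degRoot_eq : T.degRoot = {c : Fin (n + 1) | c ≠ 0 ∧ T.1 c = 0}.ncard := by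
  unfold CayleyTree.degRoot
  congr 1
  ext c
  simp only [Set.mem_ofPred_eq, ne_eq, Fin.ext_iff, Fin.val_zero]

end stats

lemma ncard_succ {n : ℕ} (P : Fin (n + 2) → Prop) [Decidable (P (Fin.last (n + 1)))] :
    {c | P c}.ncard = {c : Fin (n + 1) | P c.castSucc}.ncard
      + if P (Fin.last (n + 1)) then 1 else 0 := by
  classical
  have h : {c | P c} = (Fin.castSucc '' {c : Fin (n + 1) | P c.castSucc}) ∪
      (if P (Fin.last (n + 1)) then {Fin.last (n + 1)} else ∅) := by
    ext c
    refine Fin.lastCases ?_ (fun c => ?_) c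
    · by_cases h : P (Fin.last (n + 1)) <;> simp [h, Fin.castSucc_ne_last]
    · by_cases h : P (Fin.last (n + 1)) <;> simp [h, Fin.castSucc_ne_last]
  rw [h, Set.ncard_union_eq, Set.ncard_image_of_injective _ (Fin.castSucc_injective _)]
  · congr 1
    split_ifs <;> simp
  · split_ifs
    · simp [Fin.castSucc_ne_last]
    · simp

/-! ### Insertion of a new largest vertex -/

section ins
variable {n : ℕ}

open Classical in
/-- new parent map: the new vertex gets parent `q`, the vertices in `A` become its children -/
def ins (p : Fin (n + 1) → Fin (n + 1)) (q : Fin (n + 1)) (A : Set (Fin (n + 1))) :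
    Fin (n + 2) → Fin (n + 2) :=
  Fin.lastCases (Fin.castSucc q) (fun c => if c ∈ A then Fin.last _ else (p c).castSucc)

variable (p : Fin (n + 1) → Fin (n + 1)) (q : Fin (n + 1)) (A : Set (Fin (n + 1)))

lemma ins_last : ins p q A (Fin.last _) = q.castSucc := by simp [ins]

variable {A}

lemma ins_mem {c : Fin (n + 1)} (h : c ∈ A) : ins p q A c.castSucc = Fin.last _ := by
  simp [ins, h]

lemma ins_not_mem {c : Fin (n + 1)} (h : c ∉ A) : ins p q A c.castSucc = (p c).castSucc := by
  simp [ins, h]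

/-- projection of the new vertex to an old one -/
def proj (v : Fin (n + 1)) : Fin (n + 2) → Fin (n + 1) := Fin.lastCases v id

lemma proj_last (v : Fin (n + 1)) : proj v (Fin.last _) = v := by simp [proj]
lemma proj_cast (v x : Fin (n + 1)) : proj v x.castSucc = x := by simp [proj]

/-! #### leaf insertion -/

lemma leaf_D {u w : Fin (n + 2)} (h : D (ins p q ∅) u w) : D p (proj q u) (proj q w) := by
  by_cases hw : w = Fin.last _ ∧ u = w
  · rw [hw.2]; exact D.refl _
  have hw' : w ≠ Fin.last _ := by
    rintro rfl
    rcases h.cases_tail with h | ⟨d, hd, _⟩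
    · exact hw ⟨rfl, h⟩
    · revert hd
      refine Fin.lastCases ?_ (fun d => ?_) d
      · rw [ins_last]; exact Fin.castSucc_ne_last _
      · rw [ins_not_mem _ _ (Set.notMem_empty _)]; exact Fin.castSucc_ne_last _
  refine D.of_step (proj q) (fun u => ?_) h
  refine Fin.lastCases ?_ (fun d => ?_) u
  · rw [ins_last, proj_last, proj_cast]; exact D.refl _
  · rw [ins_not_mem _ _ (Set.notMem_empty _), proj_cast, proj_cast]; exact D.step _

lemma leaf_D' {x y : Fin (n + 1)} (h : D p x y) : D (ins p q ∅) x.castSucc y.castSucc := by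
  refine D.of_step Fin.castSucc (fun u => ?_) h
  rw [← ins_not_mem p q (Set.notMem_empty _)]
  exact D.step _

lemma leaf_isT (h : IsT p) : IsT (ins p q ∅) := by
  constructor
  · rw [← Fin.castSucc_zero, ins_not_mem _ _ (Set.notMem_empty _), h.1]
  · intro u
    have : ∀ x : Fin (n + 1), D (ins p q ∅) x.castSucc 0 := fun x => leaf_D' p q (h.2 x)
    refine Fin.lastCases ?_ (fun d => ?_) u
    · apply D.head; rw [ins_last]; exact this _
    · exact this _

lemma leaf_isT_conv (h : IsT (ins p q ∅)) : IsT p := by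
  constructor
  · have := h.1
    rw [← Fin.castSucc_zero, ins_not_mem _ _ (Set.notMem_empty _)] at this
    exact Fin.castSucc_injective _ this
  · intro x
    have := leaf_D p q (h.2 x.castSucc)
    rwa [← Fin.castSucc_zero, proj_cast, proj_cast] at this

lemma leaf_up {i : Fin (n + 1)} {u : Fin (n + 2)} (h : Up (ins p q ∅) i.castSucc u) :
    ∃ a, u = a.castSucc ∧ Up p i a := by
  induction h with
  | refl => exact ⟨i, rfl, Up.refl⟩
  | step u _ hle ih =>
    obtain ⟨a, rfl, ha⟩ := ih
    rw [ins_not_mem _ _ (Set.notMem_empty _)] at hle ⊢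
    exact ⟨_, rfl, Up.step _ ha hle⟩

lemma leaf_up' {i a : Fin (n + 1)} (h : Up p i a) : Up (ins p q ∅) i.castSucc a.castSucc := by
  induction h with
  | refl => exact Up.refl
  | step a _ hle ih =>
    have := Up.step _ ih (by rw [ins_not_mem _ _ (Set.notMem_empty _)]; exact hle)
    rwa [ins_not_mem _ _ (Set.notMem_empty _)] at this

/-! #### inner insertion -/

variable (v : Fin (n + 1)) (S : Set (Fin (n + 1)))

/-- insert the new vertex above `v` and move the children in `S` of `v` to the new vertex -/
def inner : Fin (n + 2) → Fin (n + 2) := ins p (p v) (insert v S)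

lemma inner_last : inner p v S (Fin.last _) = (p v).castSucc := ins_last _ _ _

lemma inner_v : inner p v S v.castSucc = Fin.last _ := ins_mem _ _ (Set.mem_insert _ _)

variable {v S}

lemma inner_S {c : Fin (n + 1)} (h : c ∈ S) : inner p v S c.castSucc = Fin.last _ :=
  ins_mem _ _ (Set.mem_insert_of_mem _ h)

lemma inner_other {c : Fin (n + 1)} (h : c ∉ S) (h' : c ≠ v) :
    inner p v S c.castSucc = (p c).castSucc :=
  ins_not_mem _ _ (by simp [h, h'])

variable {p}

lemma inner_D_proj (hS : ∀ c ∈ S, p c = v) {u w : Fin (n + 2)} (h : D (inner p v S) u w) :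
    D p (proj v u) (proj v w) := by
  refine D.of_step (proj v) (fun u => ?_) h
  refine Fin.lastCases ?_ (fun d => ?_) u
  · rw [inner_last, proj_last, proj_cast]; exact D.step _
  · by_cases h1 : d = v
    · subst h1; rw [inner_v, proj_last, proj_cast]; exact D.refl _
    by_cases h2 : d ∈ S
    · rw [inner_S _ h2, proj_last, proj_cast, ← hS d h2]; exact D.step _
    · rw [inner_other _ h2 h1, proj_cast, proj_cast]; exact D.step _

lemma inner_D_old (hS : ∀ c ∈ S, p c = v) {x y : Fin (n + 1)}
    (h : D (inner p v S) x.castSucc y.castSucc) : D p x y := by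
  simpa [proj_cast] using inner_D_proj hS h

lemma inner_D_of_ne (hS : ∀ c ∈ S, p c = v) {x y : Fin (n + 1)} (h : D p x y) (hy : y ≠ v) :
    D (inner p v S) x.castSucc y.castSucc := by
  refine D.ind (p := p) (motive := fun x => D (inner p v S) x.castSucc y.castSucc)
    (D.refl _) (fun x _ ih => ?_) h
  by_cases h1 : x = v
  · subst h1
    apply D.head; rw [inner_v]; apply D.head; rw [inner_last]; exact ih
  by_cases h2 : x ∈ S
  · apply D.head; rw [inner_S _ h2]
    rw [hS x h2] at ih
    rcases ih.cases with h3 | h3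
    · exact absurd (Fin.castSucc_injective _ h3).symm hy
    · rwa [inner_v] at h3
  · apply D.head; rw [inner_other _ h2 h1]; exact ih

lemma inner_D_last (hS : ∀ c ∈ S, p c = v) {x : Fin (n + 1)} :
    D (inner p v S) x.castSucc (Fin.last _) ↔ D p x v := by
  constructor
  · intro h
    simpa [proj_cast, proj_last] using inner_D_proj hS h
  · intro h
    refine D.ind (p := p) (motive := fun x => D (inner p v S) x.castSucc (Fin.last _))
      ?_ (fun x _ ih => ?_) h
    · apply D.head; rw [inner_v]; exact D.refl _
    · by_cases h1 : x = v
      · subst h1; apply D.head; rw [inner_v]; exact D.refl _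
      by_cases h2 : x ∈ S
      · apply D.head; rw [inner_S _ h2]; exact D.refl _
      · apply D.head; rw [inner_other _ h2 h1]; exact ih

/-- proper descendants of `v` in the new tree come from children of `v` not in `S` -/
lemma inner_D_v (hS : ∀ c ∈ S, p c = v) (hv : p v ≠ v) {w : Fin (n + 1)}
    (h : D (inner p v S) w.castSucc v.castSucc) :
    w = v ∨ ∃ d, d ∉ S ∧ d ≠ v ∧ p d = v ∧ D p w d := by
  rcases h.cases_tail with h | ⟨d, hd, hD⟩
  · exact Or.inl (Fin.castSucc_injective _ h)
  · right
    revert hd hD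
    refine Fin.lastCases ?_ (fun d => ?_) d
    · intro hd
      rw [inner_last] at hd
      exact absurd (Fin.castSucc_injective _ hd) hv
    · intro hd hD
      by_cases h1 : d = v
      · subst h1; rw [inner_v] at hd; exact absurd hd.symm (Fin.castSucc_ne_last _)
      by_cases h2 : d ∈ S
      · rw [inner_S _ h2] at hd; exact absurd hd.symm (Fin.castSucc_ne_last _)
      · rw [inner_other _ h2 h1] at hd
        exact ⟨d, h2, h1, Fin.castSucc_injective _ hd, inner_D_old hS hD⟩

lemma inner_D_v' (hS : ∀ c ∈ S, p c = v) {w d : Fin (n + 1)} (h1 : d ∉ S) (h2 : d ≠ v)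
    (h3 : p d = v) (h4 : D p w d) : D (inner p v S) w.castSucc v.castSucc := by
  have h5 := inner_D_of_ne hS h4 h2
  refine h5.trans ?_
  apply D.head
  rw [inner_other _ h1 h2, h3]
  exact D.refl _

lemma inner_isT (hS : ∀ c ∈ S, p c = v) (hv : v ≠ 0) (h : IsT p) : IsT (inner p v S) := by
  constructor
  · rw [← Fin.castSucc_zero, inner_other _ (fun h0 => hv ?_) hv.symm, h.1]
    rw [← hS 0 h0, h.1]
  · have : ∀ x : Fin (n + 1), D (inner p v S) x.castSucc 0 :=
      fun x => inner_D_of_ne hS (h.2 x) hv.symm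
    intro u
    refine Fin.lastCases ?_ (fun d => ?_) u
    · apply D.head; rw [inner_last]; exact this _
    · exact this _

lemma inner_isT_conv (hS : ∀ c ∈ S, p c = v) (h : IsT (inner p v S)) : IsT p ∧ v ≠ 0 := by
  have h0 : (0 : Fin (n + 1)) ∉ S ∧ 0 ≠ v := by
    constructor
    · intro h0
      have := h.1
      rw [← Fin.castSucc_zero, inner_S _ h0] at this
      exact Fin.castSucc_ne_last _ this.symm
    · rintro rfl
      have e := inner_v p 0 S
      rw [Fin.castSucc_zero, h.1, ← Fin.castSucc_zero] at e
      exact Fin.castSucc_ne_last _ e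
  refine ⟨⟨?_, fun x => ?_⟩, h0.2.symm⟩
  · have := h.1
    rw [← Fin.castSucc_zero, inner_other _ h0.1 h0.2] at this
    exact Fin.castSucc_injective _ this
  · have := h.2 x.castSucc
    rw [← Fin.castSucc_zero] at this
    exact inner_D_old hS this

lemma inner_up (hS : ∀ c ∈ S, p c = v) {i : Fin (n + 1)} {u : Fin (n + 2)}
    (h : Up (inner p v S) i.castSucc u) :
    Up p i (proj v u) ∨ ∃ c ∈ S, Up p i c ∧ v < i := by
  induction h with
  | refl => left; rw [proj_cast]; exact Up.refl
  | step u _ hle ih =>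
    rcases ih with ih | ih
    · revert hle ih
      refine Fin.lastCases ?_ (fun d => ?_) u
      · rw [inner_last, proj_last, proj_cast]
        intro h1 h2
        exact Or.inl (Up.step _ h2 h1)
      · rw [proj_cast]
        by_cases h1 : d = v
        · subst h1; rw [inner_v, proj_last]; intro _ h; exact Or.inl h
        by_cases h2 : d ∈ S
        · rw [inner_S _ h2, proj_last]
          intro _ h
          by_cases h3 : i ≤ v
          · left
            have := Up.step _ h (by rw [hS d h2]; exact h3)
            rwa [hS d h2] at this
          · exact Or.inr ⟨d, h2, h, not_le.1 h3⟩
        · rw [inner_other _ h2 h1, proj_cast]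
          intro h3 h4
          exact Or.inl (Up.step _ h4 h3)
    · exact Or.inr ih

lemma inner_up' (hS : ∀ c ∈ S, p c = v) (hv : p v ≠ v) {i a : Fin (n + 1)} (h : Up p i a) :
    (a ≠ v → Up (inner p v S) i.castSucc a.castSucc) ∧
    (a = v → Up (inner p v S) i.castSucc (Fin.last _)) := by
  have hvl : ∀ {i : Fin (n + 1)}, Up (inner p v S) i.castSucc v.castSucc →
      Up (inner p v S) i.castSucc (Fin.last _) := by
    intro i h
    have := Up.step _ h (by rw [inner_v]; exact Fin.le_last _)
    rwa [inner_v] at this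
  induction h with
  | refl =>
    refine ⟨fun _ => Up.refl, ?_⟩
    rintro rfl
    exact hvl Up.refl
  | step a _ hle ih =>
    by_cases h1 : a = v
    · subst h1
      refine ⟨fun _ => ?_, fun h => absurd h hv⟩
      have := Up.step _ (ih.2 rfl) (by rw [inner_last]; exact hle)
      rwa [inner_last] at this
    have ih := ih.1 h1
    by_cases h2 : a ∈ S
    · refine ⟨fun h => absurd (hS a h2) h, fun _ => ?_⟩
      have := Up.step _ ih (by rw [inner_S _ h2]; exact Fin.le_last _)
      rwa [inner_S _ h2] at this
    · have := Up.step _ ih (by rw [inner_other _ h2 h1]; exact hle)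
      rw [inner_other _ h2 h1] at this
      refine ⟨fun _ => this, fun h => ?_⟩
      rw [h] at this
      exact hvl this

end ins

/-! ### Statistics of inserted trees -/

section leafstats
variable {n : ℕ} (T : CayleyTree (n + 1)) (q : Fin (n + 1))

/-- leaf insertion on trees -/
def leafT : CayleyTree (n + 2) := mkT (ins T.1 q ∅) (leaf_isT _ _ (isT T))

lemma leafT_val : (leafT T q).1 = ins T.1 q ∅ := rfl

lemma leaf_lt {w : Fin (n + 2)} {c x : Fin (n + 1)} (h1 : D (ins T.1 q ∅) w c.castSucc)
    (h2 : w < x.castSucc) : ∃ w' : Fin (n + 1), D T.1 w' c ∧ w' < x := by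
  revert h1 h2
  refine Fin.lastCases ?_ (fun w => ?_) w
  · intro _ h; exact absurd h (not_lt.2 (Fin.le_last _))
  · intro h1 h2
    have := leaf_D _ _ h1
    rw [proj_cast, proj_cast] at this
    exact ⟨w, this, h2⟩

lemma leaf_last_D {w : Fin (n + 2)} (h : D (ins T.1 q ∅) w (Fin.last _)) : w = Fin.last _ := by
  rcases h.cases_tail with h | ⟨d, hd, _⟩
  · exact h
  · exfalso
    revert hd
    refine Fin.lastCases ?_ (fun d => ?_) d
    · rw [ins_last]; exact Fin.castSucc_ne_last _
    · rw [ins_not_mem _ _ (Set.notMem_empty _)]; exact Fin.castSucc_ne_last _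

lemma leaf_impe : (leafT T q).impe = T.impe := by
  classical
  unfold CayleyTree.impe
  rw [ncard_succ, if_neg, add_zero]
  · congr 1
    ext c
    simp only [Set.mem_ofPred_eq, improper_iff, leafT_val]
    rw [ins_not_mem _ _ (Set.notMem_empty _)]
    constructor
    · rintro ⟨w, h1, h2⟩; exact leaf_lt T q h1 h2
    · rintro ⟨w, h1, h2⟩; exact ⟨w.castSucc, leaf_D' _ _ h1, h2⟩
  · rw [improper_iff, leafT_val]
    rintro ⟨w, h1, h2⟩
    rw [leaf_last_D T q h1] at h2
    exact absurd h2 (not_lt.2 (Fin.le_last _))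

lemma leaf_impp : (leafT T q).impp = T.impp := by
  classical
  unfold CayleyTree.impp
  rw [ncard_succ, if_neg, add_zero]
  · congr 1
    ext c
    simp only [Set.mem_ofPred_eq, improperParent_iff, leafT_val]
    constructor
    · rintro ⟨w, h1, h2⟩; exact leaf_lt T q h1 h2
    · rintro ⟨w, h1, h2⟩; exact ⟨w.castSucc, leaf_D' _ _ h1, h2⟩
  · rw [improperParent_iff, leafT_val]
    rintro ⟨w, h1, h2⟩
    rw [leaf_last_D T q h1] at h2
    exact lt_irrefl _ h2

lemma leaf_lead : (leafT T q).lead = T.lead + 1 := by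
  classical
  unfold CayleyTree.lead
  rw [ncard_succ, if_pos]
  · congr 2
    ext c
    simp only [Set.mem_ofPred_eq, leading_iff, leafT_val]
    refine not_congr ?_
    constructor
    · rintro ⟨a, w, h0, h1, h2⟩
      obtain ⟨a, rfl, h3⟩ := leaf_up _ _ h0
      obtain ⟨w, h4, h5⟩ := leaf_lt T q h1 h2
      exact ⟨a, w, h3, h4, h5⟩
    · rintro ⟨a, w, h0, h1, h2⟩
      exact ⟨_, w.castSucc, leaf_up' _ _ h0, leaf_D' _ _ h1, h2⟩
  · rw [leading_iff, leafT_val]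
    rintro ⟨a, w, h0, h1, h2⟩
    have : a = Fin.last _ := by
      cases h0 with
      | refl => rfl
      | step a _ h => exact le_antisymm (Fin.le_last _) h
    subst this
    rw [leaf_last_D T q h1] at h2
    exact lt_irrefl _ h2

lemma leaf_deg : (leafT T q).degRoot = T.degRoot + if q = 0 then 1 else 0 := by
  classical
  rw [degRoot_eq, degRoot_eq, ncard_succ, leafT_val]
  congr 1
  · congr 1
    ext c
    simp only [Set.mem_ofPred_eq]
    rw [ins_not_mem _ _ (Set.notMem_empty _), ← Fin.castSucc_zero]
    simp only [Fin.castSucc_inj, ne_eq]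
  · rw [ins_last, ← Fin.castSucc_zero]
    simp only [Fin.castSucc_inj, ne_eq]
    simp

end leafstats

section innerstats
variable {n : ℕ} (T : CayleyTree (n + 1)) (v : Fin (n + 1)) (S : Set (Fin (n + 1)))
  (hS : ∀ c ∈ S, T.1 c = v) (hv : v ≠ 0)

/-- inner insertion on trees -/
def innerT : CayleyTree (n + 2) := mkT (inner T.1 v S) (inner_isT hS hv (isT T))

lemma innerT_val : (innerT T v S hS hv).1 = inner T.1 v S := rfl

lemma old_of_lt {w : Fin (n + 2)} {x : Fin (n + 1)} (h2 : w < x.castSucc) :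
    ∃ w' : Fin (n + 1), w = w'.castSucc ∧ w' < x := by
  revert h2
  refine Fin.lastCases ?_ (fun w => ?_) w
  · intro h; exact absurd h (not_lt.2 (Fin.le_last _))
  · intro h2; exact ⟨w, rfl, h2⟩

include hS in
lemma inner_exists_last (x : Fin (n + 1)) :
    (∃ w, D (inner T.1 v S) w (Fin.last _) ∧ w < x.castSucc) ↔ ∃ w, D T.1 w v ∧ w < x := by
  constructor
  · rintro ⟨w, h1, h2⟩
    obtain ⟨w, rfl, h3⟩ := old_of_lt h2
    exact ⟨w, (inner_D_last hS).1 h1, h3⟩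
  · rintro ⟨w, h1, h2⟩
    exact ⟨w.castSucc, (inner_D_last hS).2 h1, h2⟩

include hS in
lemma inner_exists_old {c : Fin (n + 1)} (hc : c ≠ v) (x : Fin (n + 1)) :
    (∃ w, D (inner T.1 v S) w c.castSucc ∧ w < x.castSucc) ↔ ∃ w, D T.1 w c ∧ w < x := by
  constructor
  · rintro ⟨w, h1, h2⟩
    obtain ⟨w, rfl, h3⟩ := old_of_lt h2
    exact ⟨w, inner_D_old hS h1, h3⟩
  · rintro ⟨w, h1, h2⟩
    exact ⟨w.castSucc, inner_D_of_ne hS h1 hc, h2⟩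

variable (hI : ∀ c ∈ S, T.ImproperEdge c)

include hI in
lemma inner_impe : (innerT T v S hS hv).impe = T.impe + 1 := by
  classical
  unfold CayleyTree.impe
  rw [ncard_succ]
  have h1 : {c : Fin (n + 1) | (innerT T v S hS hv).ImproperEdge c.castSucc}
      = insert v {c | T.ImproperEdge c} := by
    ext c
    rw [Set.mem_insert_iff]
    simp only [Set.mem_ofPred_eq]
    by_cases h : c = v
    · subst h
      simp only [true_or, iff_true]
      rw [improper_iff, innerT_val, inner_v]
      exact ⟨_, D.refl _, Fin.castSucc_lt_last _⟩
    · simp only [h, false_or]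
      by_cases h2 : c ∈ S
      · simp only [hI c h2, iff_true]
        rw [improper_iff, innerT_val, inner_S _ h2]
        exact ⟨_, D.refl _, Fin.castSucc_lt_last _⟩
      · rw [improper_iff, improper_iff, innerT_val, inner_other _ h2 h]
        exact inner_exists_old T v S hS h _
  have h2 : (innerT T v S hS hv).ImproperEdge (Fin.last _) ↔ T.ImproperEdge v := by
    rw [improper_iff, improper_iff, innerT_val, inner_last]
    exact inner_exists_last T v S hS _
  rw [h1]
  by_cases h : T.ImproperEdge v
  · rw [if_pos (h2.2 h), Set.insert_eq_of_mem (by exact h)]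
  · rw [if_neg (fun h' => h (h2.1 h')), Set.ncard_insert_of_notMem (by exact h)]

lemma inner_deg : (innerT T v S hS hv).degRoot = T.degRoot := by
  classical
  rw [degRoot_eq, degRoot_eq, ncard_succ, innerT_val]
  have h1 : {c : Fin (n + 1) | c.castSucc ≠ 0 ∧ inner T.1 v S c.castSucc = 0}
      = {c | c ≠ 0 ∧ T.1 c = 0} \ {v} := by
    ext c
    rw [Set.mem_sdiff, Set.mem_singleton_iff]
    simp only [Set.mem_ofPred_eq]
    rw [← Fin.castSucc_zero]
    by_cases h : c = v
    · subst h
      simp only [inner_v, not_true, and_false, iff_false, not_and]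
      intro _ h3; exact Fin.castSucc_ne_last _ h3.symm
    · by_cases h2 : c ∈ S
      · rw [inner_S _ h2, hS c h2]
        simp [hv]
      · rw [inner_other _ h2 h]
        simp only [Fin.castSucc_inj, ne_eq, h, not_false_iff, and_true]
  have h2 : (Fin.last (n + 1) ≠ 0 ∧ inner T.1 v S (Fin.last _) = 0) ↔ (v ≠ 0 ∧ T.1 v = 0) := by
    rw [inner_last, ← Fin.castSucc_zero]
    have h3 : Fin.last (n + 1) ≠ Fin.castSucc 0 := (Fin.castSucc_ne_last _).symm
    simp only [Fin.castSucc_inj, ne_eq, h3, hv]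
  rw [h1]
  by_cases h : v ≠ 0 ∧ T.1 v = 0
  · rw [if_pos (h2.2 h), Set.ncard_sdiff_singleton_add_one (by exact h)]
  · rw [if_neg (fun h' => h (h2.1 h')), Set.sdiff_singleton_eq_self (by exact h), add_zero]

include hI in
lemma inner_lead : (innerT T v S hS hv).lead = T.lead := by
  classical
  have hvv := (isT T).ne hv
  unfold CayleyTree.lead
  rw [ncard_succ, if_neg, add_zero]
  · congr 1
    ext i
    simp only [Set.mem_ofPred_eq, leading_iff, innerT_val]
    refine not_congr ?_
    constructor
    · rintro ⟨u, w, h0, h1, h2⟩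
      obtain ⟨w, rfl, h3⟩ := old_of_lt h2
      rcases inner_up hS h0 with h4 | ⟨c, hc, h4, h5⟩
      · have := inner_D_proj hS h1
        rw [proj_cast] at this
        exact ⟨_, w, h4, this, h3⟩
      · obtain ⟨w', h6, h7⟩ := (improper_iff T c).1 (hI c hc)
        rw [hS c hc] at h7
        exact ⟨c, w', h4, h6, h7.trans h5⟩
    · rintro ⟨a, w, h0, h1, h2⟩
      have h3 := inner_up' hS hvv h0
      by_cases h : a = v
      · exact ⟨_, w.castSucc, h3.2 h, (inner_D_last hS).2 (h ▸ h1), h2⟩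
      · exact ⟨_, w.castSucc, h3.1 h, inner_D_of_ne hS h1 h, h2⟩
  · rw [leading_iff, innerT_val, not_not]
    exact ⟨_, v.castSucc, Up.refl, (inner_D_last hS).2 (D.refl _), Fin.castSucc_lt_last _⟩

lemma inner_impp_aux : (innerT T v S hS hv).impp =
    {a : Fin (n + 1) | (innerT T v S hS hv).ImproperParent a.castSucc}.ncard + 1 ∧
    ∀ a ≠ v, ((innerT T v S hS hv).ImproperParent a.castSucc ↔ T.ImproperParent a) := by
  classical
  constructor
  · unfold CayleyTree.impp
    rw [ncard_succ, if_pos]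
    rw [improperParent_iff, innerT_val]
    exact ⟨v.castSucc, (inner_D_last hS).2 (D.refl _), Fin.castSucc_lt_last _⟩
  · intro a ha
    rw [improperParent_iff, improperParent_iff, innerT_val]
    exact inner_exists_old T v S hS ha _

lemma inner_IP_iff : (innerT T v S hS hv).ImproperParent v.castSucc ↔
    ∃ d, d ∉ S ∧ T.1 d = v ∧ T.ImproperEdge d := by
  have hvv := (isT T).ne hv
  rw [improperParent_iff, innerT_val]
  constructor
  · rintro ⟨w, h1, h2⟩
    obtain ⟨w, rfl, h3⟩ := old_of_lt h2
    rcases inner_D_v hS hvv h1 with rfl | ⟨d, h4, h5, h6, h7⟩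
    · exact absurd h3 (lt_irrefl _)
    · exact ⟨d, h4, h6, (improper_iff T d).2 ⟨w, h7, h6 ▸ h3⟩⟩
  · rintro ⟨d, h1, h2, h3⟩
    obtain ⟨w, h4, h5⟩ := (improper_iff T d).1 h3
    refine ⟨w.castSucc, inner_D_v' hS h1 ?_ h2 h4, h2 ▸ h5⟩
    rintro rfl
    exact hvv h2

lemma inner_impp_of_eq
    (h : T.ImproperParent v → ∃ d, d ∉ S ∧ T.1 d = v ∧ T.ImproperEdge d) :
    (innerT T v S hS hv).impp = T.impp + 1 := by
  obtain ⟨h1, h2⟩ := inner_impp_aux T v S hS hv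
  rw [h1]
  unfold CayleyTree.impp
  congr 2
  ext a
  simp only [Set.mem_ofPred_eq]
  by_cases ha : a = v
  · subst ha
    rw [inner_IP_iff]
    refine ⟨?_, h⟩
    rintro ⟨d, _, h3, h4⟩
    exact (improperParent_iff' T a).2 ⟨d, h4, h3⟩
  · exact h2 a ha

lemma inner_impp_of_max (h0 : T.ImproperParent v)
    (h : ∀ d, T.1 d = v → T.ImproperEdge d → d ∈ S) :
    (innerT T v S hS hv).impp = T.impp := by
  obtain ⟨h1, h2⟩ := inner_impp_aux T v S hS hv
  rw [h1]
  unfold CayleyTree.impp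
  rw [← Set.ncard_sdiff_singleton_add_one (a := v) (s := {a | T.ImproperParent a}) (by exact h0)]
  congr 2
  ext a
  rw [Set.mem_sdiff, Set.mem_singleton_iff]
  simp only [Set.mem_ofPred_eq]
  by_cases ha : a = v
  · subst ha
    rw [inner_IP_iff]
    simp only [not_true, and_false, iff_false]
    rintro ⟨d, h3, h4, h5⟩
    exact h3 (h d h4 h5)
  · rw [h2 a ha]
    simp [ha]

end innerstats

/-! ### The bijection -/

section bij
variable {n : ℕ}

/-- admissible data for an inner insertion -/
structure Good (T : CayleyTree (n + 1)) (v : Fin (n + 1)) (S : Set (Fin (n + 1))) : Prop where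
  par : ∀ c ∈ S, T.1 c = v
  ne : v ≠ 0
  imp : ∀ c ∈ S, T.ImproperEdge c
  dom : ∀ s ∈ S, ∀ d, d ∉ S → T.1 d = v → T.beta s < T.beta d

lemma Good.dominates {T : CayleyTree (n + 1)} {v : Fin (n + 1)} {S : Set (Fin (n + 1))}
    (h : Good T v S) {s : Fin (n + 1)} (hs : s ∈ S) :
    ∃ w : Fin (n + 2), D (inner T.1 v S) w s.castSucc ∧
      ∀ u, D (inner T.1 v S) u v.castSucc → w < u := by
  have hvv := (isT T).ne h.ne
  obtain ⟨w, hw, hD⟩ := beta_spec T s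
  have hsv : s ≠ v := by
    rintro rfl
    exact hvv (h.par _ hs)
  refine ⟨w.castSucc, inner_D_of_ne h.par hD hsv, fun u => ?_⟩
  refine Fin.lastCases ?_ (fun u => ?_) u
  · intro _; exact Fin.castSucc_lt_last _
  · intro hu
    rw [Fin.castSucc_lt_castSucc_iff]
    rw [Fin.lt_def, hw]
    rcases inner_D_v h.par hvv hu with rfl | ⟨d, h1, h2, h3, h4⟩
    · have := (h.imp s hs).2
      rwa [h.par s hs] at this
    · exact lt_of_lt_of_le (h.dom s hs d h1 h3) (beta_le T h4)

lemma ins_mem_iff (p : Fin (n + 1) → Fin (n + 1)) (q : Fin (n + 1)) (A : Set (Fin (n + 1)))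
    (c : Fin (n + 1)) : ins p q A c.castSucc = Fin.last _ ↔ c ∈ A := by
  constructor
  · intro h
    by_contra h1
    rw [ins_not_mem _ _ h1] at h
    exact Fin.castSucc_ne_last _ h
  · exact ins_mem _ _

lemma good_inj {T₁ T₂ : CayleyTree (n + 1)} {v₁ v₂ : Fin (n + 1)} {S₁ S₂ : Set (Fin (n + 1))}
    (h₁ : Good T₁ v₁ S₁) (h₂ : Good T₂ v₂ S₂) (h : inner T₁.1 v₁ S₁ = inner T₂.1 v₂ S₂) :
    T₁ = T₂ ∧ v₁ = v₂ ∧ S₁ = S₂ := by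
  have hA : ∀ c, c ∈ insert v₁ S₁ ↔ c ∈ insert v₂ S₂ := by
    intro c
    rw [← ins_mem_iff T₁.1 (T₁.1 v₁), ← ins_mem_iff T₂.1 (T₂.1 v₂)]
    change inner T₁.1 v₁ S₁ _ = _ ↔ inner T₂.1 v₂ S₂ _ = _
    rw [h]
  have hv : v₁ = v₂ := by
    by_contra hne
    have a1 : v₁ ∈ S₂ := ((hA v₁).1 (Set.mem_insert _ _)).resolve_left hne
    have a2 : v₂ ∈ S₁ := ((hA v₂).2 (Set.mem_insert _ _)).resolve_left (Ne.symm hne)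
    obtain ⟨w1, b1, b2⟩ := h₁.dominates a2
    obtain ⟨w2, c1, c2⟩ := h₂.dominates a1
    rw [h] at b1 b2
    exact lt_asymm (b2 _ c1) (c2 _ b1)
  subst hv
  have hn1 : v₁ ∉ S₁ := fun hm => (isT T₁).ne h₁.ne (h₁.par _ hm)
  have hn2 : v₁ ∉ S₂ := fun hm => (isT T₂).ne h₂.ne (h₂.par _ hm)
  have hSS : S₁ = S₂ := by
    ext c
    have := hA c
    rw [Set.mem_insert_iff, Set.mem_insert_iff] at this
    by_cases hc : c = v₁
    · subst hc; simp [hn1, hn2]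
    · simpa [hc] using this
  subst hSS
  refine ⟨Subtype.ext (funext fun c => ?_), rfl, rfl⟩
  by_cases hc : c = v₁
  · subst hc
    have := congrFun h (Fin.last _)
    rw [inner_last, inner_last] at this
    exact Fin.castSucc_injective _ this
  by_cases hc' : c ∈ S₁
  · rw [h₁.par c hc', h₂.par c hc']
  · have := congrFun h c.castSucc
    rw [inner_other _ hc' hc, inner_other _ hc' hc] at this
    exact Fin.castSucc_injective _ this

/-- the siblings of `c` with `β` at most that of `c` -/
def sib (T : CayleyTree (n + 1)) (c : Fin (n + 1)) : Set (Fin (n + 1)) :=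
  {c' | T.1 c' = T.1 c ∧ T.beta c' ≤ T.beta c}

lemma good_sib (T : CayleyTree (n + 1)) (c : Fin (n + 1)) (hc : T.ImproperEdge c) :
    Good T (T.1 c) (sib T c) where
  par := fun _ h => h.1
  ne := fun h => by
    have := hc.2
    rw [h] at this
    exact absurd this (Nat.not_lt_zero _)
  imp := fun d h => by
    refine ⟨fun h0 => ?_, ?_⟩
    · obtain rfl : d = 0 := Fin.ext h0
      have h1 := h.1
      rw [(isT T).1] at h1
      have := hc.2
      rw [← h1] at this
      exact absurd this (Nat.not_lt_zero _)
    · rw [h.1]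
      exact lt_of_le_of_lt h.2 hc.2
  dom := fun s hs d hd hp => by
    by_contra h
    exact hd ⟨hp, (not_lt.1 h).trans hs.2⟩

lemma good_empty (T : CayleyTree (n + 1)) (v : Fin (n + 1)) (hv : v ≠ 0) :
    Good T v ∅ where
  par := fun _ h => absurd h (Set.notMem_empty _)
  ne := hv
  imp := fun _ h => absurd h (Set.notMem_empty _)
  dom := fun _ h => absurd h (Set.notMem_empty _)

/-- inner insertion for good data -/
def Good.tree {T : CayleyTree (n + 1)} {v : Fin (n + 1)} {S : Set (Fin (n + 1))}
    (h : Good T v S) : CayleyTree (n + 2) := innerT T v S h.par h.ne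

/-- the possible insertions -/
def Code (T : CayleyTree (n + 1)) : Type :=
  Fin (n + 1) ⊕ ({v : Fin (n + 1) // v ≠ 0} ⊕ {c : Fin (n + 1) // T.ImproperEdge c})

/-- the insertion map -/
def F : (Σ T : CayleyTree (n + 1), Code T) → CayleyTree (n + 2)
  | ⟨T, .inl q⟩ => leafT T q
  | ⟨T, .inr (.inl v)⟩ => (good_empty T v.1 v.2).tree
  | ⟨T, .inr (.inr c)⟩ => (good_sib T c.1 c.2).tree

lemma leaf_ne_good {T₁ T₂ : CayleyTree (n + 1)} {q v : Fin (n + 1)} {S : Set (Fin (n + 1))}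
    (h : Good T₂ v S) : leafT T₁ q ≠ h.tree := by
  intro he
  have h1 := congrFun (congrArg Subtype.val he) v.castSucc
  change ins T₁.1 q ∅ _ = inner T₂.1 v S _ at h1
  rw [inner_v, ins_mem_iff] at h1
  exact h1

lemma leaf_inj {T₁ T₂ : CayleyTree (n + 1)} {q₁ q₂ : Fin (n + 1)}
    (h : leafT T₁ q₁ = leafT T₂ q₂) : T₁ = T₂ ∧ q₁ = q₂ := by
  have h1 : ins T₁.1 q₁ ∅ = ins T₂.1 q₂ ∅ := congrArg Subtype.val h
  constructor
  · refine Subtype.ext (funext fun c => ?_)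
    have := congrFun h1 c.castSucc
    rw [ins_not_mem _ _ (Set.notMem_empty _), ins_not_mem _ _ (Set.notMem_empty _)] at this
    exact Fin.castSucc_injective _ this
  · have := congrFun h1 (Fin.last _)
    rw [ins_last, ins_last] at this
    exact Fin.castSucc_injective _ this

lemma F_inj : Function.Injective (F (n := n)) := by
  rintro ⟨T₁, q₁ | v₁ | c₁⟩ ⟨T₂, q₂ | v₂ | c₂⟩ h
  · obtain ⟨rfl, rfl⟩ := leaf_inj h
    rfl
  · exact absurd h (leaf_ne_good (good_empty T₂ v₂.1 v₂.2))
  · exact absurd h (leaf_ne_good (good_sib T₂ c₂.1 c₂.2))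
  · exact absurd h.symm (leaf_ne_good (good_empty T₁ v₁.1 v₁.2))
  · obtain ⟨rfl, h2, -⟩ := good_inj (good_empty T₁ v₁.1 v₁.2) (good_empty T₂ v₂.1 v₂.2)
      (congrArg Subtype.val h)
    obtain rfl := Subtype.ext h2
    rfl
  · obtain ⟨rfl, h2, h3⟩ := good_inj (good_empty T₁ v₁.1 v₁.2) (good_sib T₂ c₂.1 c₂.2)
      (congrArg Subtype.val h)
    have : c₂.1 ∈ (∅ : Set (Fin (n + 1))) := by rw [h3]; exact ⟨rfl, le_rfl⟩
    exact absurd this (Set.notMem_empty _)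
  · exact absurd h.symm (leaf_ne_good (good_sib T₁ c₁.1 c₁.2))
  · obtain ⟨rfl, h2, h3⟩ := good_inj (good_sib T₁ c₁.1 c₁.2) (good_empty T₂ v₂.1 v₂.2)
      (congrArg Subtype.val h)
    have : c₁.1 ∈ (∅ : Set (Fin (n + 1))) := by rw [← h3]; exact ⟨rfl, le_rfl⟩
    exact absurd this (Set.notMem_empty _)
  · obtain ⟨rfl, h2, h3⟩ := good_inj (good_sib T₁ c₁.1 c₁.2) (good_sib T₂ c₂.1 c₂.2)
      (congrArg Subtype.val h)
    have h4 : c₁.1 ∈ sib T₁ c₂.1 := by rw [← h3]; exact ⟨rfl, le_rfl⟩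
    have h5 : c₂.1 ∈ sib T₁ c₁.1 := by rw [h3]; exact ⟨rfl, le_rfl⟩
    obtain rfl : c₁ = c₂ := Subtype.ext
      (beta_inj T₁ (good_sib T₁ c₁.1 c₁.2).ne h2 (le_antisymm h4.2 h5.2))
    rfl

lemma exists_old {u : Fin (n + 2)} (h : u ≠ Fin.last _) : ∃ a : Fin (n + 1), u = a.castSucc :=
  ⟨u.castPred h, by simp⟩

lemma F_surj : Function.Surjective (F (n := n)) := by
  classical
  intro T'
  have hT' := isT T'
  have hl0 : Fin.last (n + 1) ≠ 0 := by
    rw [← Fin.castSucc_zero]; exact (Fin.castSucc_ne_last _).symm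
  obtain ⟨q, hq⟩ := exists_old (hT'.ne hl0)
  by_cases hA : ∃ c : Fin (n + 1), T'.1 c.castSucc = Fin.last _
  · obtain ⟨v, hvA, hmax⟩ := Set.exists_max_image
      {c : Fin (n + 1) | T'.1 c.castSucc = Fin.last _} (fun c => T'.beta c.castSucc)
      (Set.toFinite _) hA
    have hvA : T'.1 v.castSucc = Fin.last _ := hvA
    set S : Set (Fin (n + 1)) := {c | T'.1 c.castSucc = Fin.last _ ∧ c ≠ v} with hSdef
    have hpc : ∀ c : Fin (n + 1), ∃ a : Fin (n + 1),
        (c = v → a = q) ∧ (c ∈ S → a = v) ∧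
          (c ≠ v → c ∉ S → T'.1 c.castSucc = a.castSucc) := by
      intro c
      by_cases h1 : c = v
      · refine ⟨q, fun _ => rfl, fun h => absurd h1 h.2, fun h => absurd h1 h⟩
      by_cases h2 : T'.1 c.castSucc = Fin.last _
      · exact ⟨v, fun h => absurd h h1, fun _ => rfl, fun _ h => absurd ⟨h2, h1⟩ h⟩
      · obtain ⟨a, ha⟩ := exists_old h2
        exact ⟨a, fun h => absurd h h1, fun h => absurd h.1 h2, fun _ _ => ha⟩
    choose p hp1 hp2 hp3 using hpc
    have hin : inner p v S = T'.1 := by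
      funext u
      refine Fin.lastCases ?_ (fun c => ?_) u
      · rw [inner_last, hp1 v rfl, hq]
      · by_cases h1 : c = v
        · subst h1; rw [inner_v, hvA]
        by_cases h2 : c ∈ S
        · rw [inner_S _ h2, h2.1]
        · rw [inner_other _ h2 h1, hp3 c h1 h2]
    obtain ⟨hT, hv0⟩ := inner_isT_conv (p := p) (v := v) (S := S) hp2 (by rw [hin]; exact hT')
    set T : CayleyTree (n + 1) := mkT p hT with hTdef
    have hTv : T.1 = p := rfl
    have hvv := hT.ne hv0
    rcases S.eq_empty_or_nonempty with hS | hS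
    · refine ⟨⟨T, .inr (.inl ⟨v, hv0⟩)⟩, ?_⟩
      apply Subtype.ext
      change inner p v ∅ = _
      rw [← hin, hS]
    · obtain ⟨c, hcS, hcmax⟩ := Set.exists_max_image S (fun c => T.beta c) (Set.toFinite _) hS
      have hlt : T.beta c < T'.beta v.castSucc := by
        have h1 : T'.beta c.castSucc ≤ T'.beta v.castSucc := hmax c hcS.1
        have h2 : T'.beta c.castSucc ≠ T'.beta v.castSucc := by
          intro he
          have := beta_inj T' (by rw [hcS.1]; exact hl0) (by rw [hcS.1, hvA]) he
          exact hcS.2 (Fin.castSucc_injective _ this)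
        have h3 : T.beta c ≤ T'.beta c.castSucc := by
          obtain ⟨w, hw, hD⟩ := beta_spec T' c.castSucc
          rw [← hw]
          have hwc : w.val ≤ c.val := by
            rw [hw]; exact beta_le T' (D.refl _)
          obtain ⟨w, rfl⟩ : ∃ a : Fin (n + 1), w = a.castSucc := by
            apply exists_old
            rintro rfl
            have := c.2
            simp at hwc
            omega
          rw [← hin] at hD
          exact beta_le T (inner_D_old hp2 hD)
        omega
      have hcimp : T.ImproperEdge c := by
        rw [CayleyTree.ImproperEdge, hTv, hp2 c hcS]
        have h1 : T'.beta v.castSucc ≤ v.val := beta_le T' (D.refl _)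
        refine ⟨fun h0 => ?_, by omega⟩
        obtain rfl : c = 0 := Fin.ext h0
        have := hp2 _ hcS
        rw [hT.1] at this
        exact hv0 this.symm
      have hsib : sib T c = S := by
        ext d
        constructor
        · rintro ⟨h1, h2⟩
          by_contra hd
          rw [hTv, hp2 c hcS] at h1
          have hdv : d ≠ v := by
            rintro rfl; exact hvv h1
          obtain ⟨w, hw, hD⟩ := beta_spec T d
          have h3 := inner_D_v' hp2 hd hdv h1 hD
          rw [hin] at h3
          have h4 := beta_le T' h3
          rw [Fin.val_castSucc] at h4
          omega
        · intro hd
          refine ⟨?_, hcmax d hd⟩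
          rw [hTv, hp2 c hcS, hp2 d hd]
      refine ⟨⟨T, .inr (.inr ⟨c, hcimp⟩)⟩, ?_⟩
      apply Subtype.ext
      change inner p (p c) (sib T c) = _
      rw [hsib, hp2 c hcS, hin]
  · push Not at hA
    have h1 : ∀ c : Fin (n + 1), ∃ a : Fin (n + 1), T'.1 c.castSucc = a.castSucc :=
      fun c => exists_old (hA c)
    choose p hp using h1
    have hin : ins p q ∅ = T'.1 := by
      funext u
      refine Fin.lastCases ?_ (fun c => ?_) u
      · rw [ins_last, hq]
      · rw [ins_not_mem _ _ (Set.notMem_empty _), hp]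
    refine ⟨⟨mkT p (leaf_isT_conv p q (by rw [hin]; exact hT')), .inl q⟩, ?_⟩
    exact Subtype.ext hin

end bij

/-! ### Invariants, weights and the recursion -/

section final
variable {n : ℕ}

/-- `c` has maximal `β` among the improper children of its parent -/
def IsMax (T : CayleyTree (n + 1)) (c : Fin (n + 1)) : Prop :=
  ∀ d, T.1 d = T.1 c → T.ImproperEdge d → T.beta d ≤ T.beta c

lemma empty_impp (T : CayleyTree (n + 1)) (v : Fin (n + 1)) (hv : v ≠ 0) :
    (good_empty T v hv).tree.impp = T.impp + 1 := by
  refine inner_impp_of_eq T v ∅ _ _ (fun h => ?_)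
  obtain ⟨d, h1, h2⟩ := (improperParent_iff' T v).1 h
  exact ⟨d, Set.notMem_empty _, h2, h1⟩

lemma sib_impp_max (T : CayleyTree (n + 1)) (c : Fin (n + 1)) (hc : T.ImproperEdge c)
    (h : IsMax T c) : (good_sib T c hc).tree.impp = T.impp := by
  refine inner_impp_of_max T _ _ _ _ ((improperParent_iff' T _).2 ⟨c, hc, rfl⟩) ?_
  intro d h1 h2
  exact ⟨h1, h d h1 h2⟩

lemma sib_impp_not_max (T : CayleyTree (n + 1)) (c : Fin (n + 1)) (hc : T.ImproperEdge c)
    (h : ¬ IsMax T c) : (good_sib T c hc).tree.impp = T.impp + 1 := by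
  refine inner_impp_of_eq T _ _ _ _ (fun _ => ?_)
  unfold IsMax at h
  push Not at h
  obtain ⟨d, h1, h2, h3⟩ := h
  exact ⟨d, fun hd => absurd hd.2 (not_le.2 h3), h1, h2⟩

lemma Good.impe {T : CayleyTree (n + 1)} {v : Fin (n + 1)} {S : Set (Fin (n + 1))}
    (h : Good T v S) : h.tree.impe = T.impe + 1 := inner_impe T v S h.par h.ne h.imp

lemma Good.lead {T : CayleyTree (n + 1)} {v : Fin (n + 1)} {S : Set (Fin (n + 1))}
    (h : Good T v S) : h.tree.lead = T.lead := inner_lead T v S h.par h.ne h.imp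

lemma Good.deg {T : CayleyTree (n + 1)} {v : Fin (n + 1)} {S : Set (Fin (n + 1))}
    (h : Good T v S) : h.tree.degRoot = T.degRoot := inner_deg T v S h.par h.ne

lemma fin1 (a b : Fin (0 + 1)) : a = b := Fin.ext (by omega)

lemma stats_one (T : CayleyTree 1) :
    T.impe = 0 ∧ T.impp = 0 ∧ T.degRoot = 0 ∧ T.lead = 1 := by
  have hn : ∀ a b : Fin 1, ¬ a < b := fun a b h => by
    rw [fin1 a b] at h; exact lt_irrefl _ h
  refine ⟨?_, ?_, ?_, ?_⟩
  · unfold CayleyTree.impe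
    rw [Set.ncard_eq_zero]
    ext c
    simp only [Set.mem_ofPred_eq, improper_iff, Set.mem_empty_iff_false, iff_false]
    rintro ⟨w, _, h⟩; exact hn _ _ h
  · unfold CayleyTree.impp
    rw [Set.ncard_eq_zero]
    ext c
    simp only [Set.mem_ofPred_eq, improperParent_iff, Set.mem_empty_iff_false, iff_false]
    rintro ⟨w, _, h⟩; exact hn _ _ h
  · rw [degRoot_eq, Set.ncard_eq_zero]
    ext c
    simp only [Set.mem_ofPred_eq, Set.mem_empty_iff_false, iff_false]
    rintro ⟨h, _⟩; exact h (fin1 _ _)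
  · unfold CayleyTree.lead
    rw [Set.ncard_eq_one]
    refine ⟨0, ?_⟩
    ext c
    simp only [Set.mem_ofPred_eq, leading_iff, Set.mem_singleton_iff]
    refine iff_of_true ?_ (fin1 _ _)
    rintro ⟨_, _, _, _, h⟩; exact hn _ _ h

lemma inv : ∀ (n : ℕ) (T : CayleyTree (n + 1)),
    T.impp ≤ T.impe ∧ T.degRoot + 1 ≤ T.lead ∧ (1 ≤ n → 1 ≤ T.degRoot) := by
  intro n
  induction n with
  | zero =>
    intro T
    obtain ⟨h1, h2, h3, h4⟩ := stats_one T
    omega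
  | succ n ih =>
    intro T'
    obtain ⟨⟨T, q | v | c⟩, rfl⟩ := F_surj T'
    · obtain ⟨h1, h2, h3⟩ := ih T
      change (leafT T q).impp ≤ (leafT T q).impe ∧ (leafT T q).degRoot + 1 ≤ (leafT T q).lead ∧
        (1 ≤ n + 1 → 1 ≤ (leafT T q).degRoot)
      rw [leaf_impe, leaf_impp, leaf_lead, leaf_deg]
      refine ⟨h1, by split_ifs <;> omega, fun _ => ?_⟩
      rcases Nat.eq_zero_or_pos n with hn | hn
      · subst hn
        rw [if_pos (fin1 _ _)]; omega
      · have := h3 hn; omega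
    · obtain ⟨h1, h2, h3⟩ := ih T
      have hn : 1 ≤ n := by
        by_contra hn
        obtain rfl : n = 0 := by omega
        exact v.2 (fin1 _ _)
      have e1 := (good_empty T v.1 v.2).impe
      have e2 := (good_empty T v.1 v.2).lead
      have e3 := (good_empty T v.1 v.2).deg
      have e4 := empty_impp T v.1 v.2
      have := h3 hn
      change (good_empty T v.1 v.2).tree.impp ≤ (good_empty T v.1 v.2).tree.impe ∧
        (good_empty T v.1 v.2).tree.degRoot + 1 ≤ (good_empty T v.1 v.2).tree.lead ∧
        (1 ≤ n + 1 → 1 ≤ (good_empty T v.1 v.2).tree.degRoot)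
      omega
    · obtain ⟨h1, h2, h3⟩ := ih T
      have hn : 1 ≤ n := by
        by_contra hn
        obtain rfl : n = 0 := by omega
        exact (good_sib T c.1 c.2).ne (fin1 _ _)
      have e1 := (good_sib T c.1 c.2).impe
      have e2 := (good_sib T c.1 c.2).lead
      have e3 := (good_sib T c.1 c.2).deg
      have e4 : (good_sib T c.1 c.2).tree.impp ≤ T.impp + 1 := by
        by_cases h : IsMax T c.1
        · rw [sib_impp_max T c.1 c.2 h]; omega
        · rw [sib_impp_not_max T c.1 c.2 h]
      have := h3 hn
      change (good_sib T c.1 c.2).tree.impp ≤ (good_sib T c.1 c.2).tree.impe ∧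
        (good_sib T c.1 c.2).tree.degRoot + 1 ≤ (good_sib T c.1 c.2).tree.lead ∧
        (1 ≤ n + 1 → 1 ≤ (good_sib T c.1 c.2).tree.degRoot)
      omega

/-- the weight of a tree -/
def wt {m : ℕ} (T : CayleyTree m) : MvPolynomial (Fin 4) ℚ :=
  ((X 1 : MvPolynomial (Fin 4) ℚ) + 1) ^ (T.impe - T.impp) * (X 1 + X 3) ^ T.impp
        * X 0 ^ (T.degRoot - 1) * X 2 ^ (T.lead - T.degRoot - 1)

open Classical in
instance instCode (T : CayleyTree (n + 1)) : Fintype (Code T) :=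
  inferInstanceAs (Fintype (Fin (n + 1) ⊕ ({v : Fin (n + 1) // v ≠ 0} ⊕
    {c : Fin (n + 1) // T.ImproperEdge c})))

open Classical in
lemma sum_trees (f : CayleyTree (n + 2) → MvPolynomial (Fin 4) ℚ) :
    ∑ T', f T' = ∑ T : CayleyTree (n + 1), (∑ q, f (leafT T q)
      + (∑ v : {v : Fin (n + 1) // v ≠ 0}, f (good_empty T v.1 v.2).tree
        + ∑ c : {c : Fin (n + 1) // T.ImproperEdge c}, f (good_sib T c.1 c.2).tree)) := by
  rw [← Function.Bijective.sum_comp (e := F) ⟨F_inj, F_surj⟩ f, Fintype.sum_sigma]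
  refine Finset.sum_congr rfl (fun T _ => ?_)
  have h := Fintype.sum_sum_type (fun x : Fin (n + 1) ⊕ ({v : Fin (n + 1) // v ≠ 0} ⊕
    {c : Fin (n + 1) // T.ImproperEdge c}) => f (F ⟨T, x⟩))
  have h2 := Fintype.sum_sum_type (fun x : {v : Fin (n + 1) // v ≠ 0} ⊕
    {c : Fin (n + 1) // T.ImproperEdge c} => f (F ⟨T, .inr x⟩))
  rw [h2] at h
  refine Eq.trans ?_ h
  rfl

open Classical in
lemma card_max (T : CayleyTree (n + 1)) :
    {c : Fin (n + 1) | T.ImproperEdge c ∧ IsMax T c}.ncard = T.impp := by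
  unfold CayleyTree.impp
  refine Set.ncard_congr (fun c _ => T.1 c) ?_ ?_ ?_
  · rintro c ⟨h1, h2⟩
    exact (improperParent_iff' T _).2 ⟨c, h1, rfl⟩
  · rintro c d ⟨h1, h2⟩ ⟨h3, h4⟩ he
    exact beta_inj T (good_sib T c h1).ne he (le_antisymm (h4 c he h1) (h2 d he.symm h3))
  · intro a ha
    obtain ⟨c, h1, h2⟩ := (improperParent_iff' T _).1 ha
    obtain ⟨d, ⟨h3, h4⟩, h5⟩ := Set.exists_max_image {d | T.ImproperEdge d ∧ T.1 d = a}
      (fun d => T.beta d) (Set.toFinite _) ⟨c, h1, h2⟩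
    refine ⟨d, ⟨h3, ?_⟩, h4⟩
    intro e h6 h7
    exact h5 e ⟨h7, h6.trans h4⟩

lemma wt_leaf (hn : 1 ≤ n) (T : CayleyTree (n + 1)) (q : Fin (n + 1)) :
    wt (leafT T q) = (if q = 0 then X 0 else X 2) * wt T := by
  obtain ⟨h1, h2, h3⟩ := inv n T
  have h3 := h3 hn
  unfold wt
  rw [leaf_impe, leaf_impp, leaf_lead, leaf_deg]
  split_ifs
  · rw [show T.degRoot + 1 - 1 = (T.degRoot - 1) + 1 by omega,
      show T.lead + 1 - (T.degRoot + 1) - 1 = T.lead - T.degRoot - 1 by omega, pow_succ]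
    ring
  · rw [add_zero, show T.lead + 1 - T.degRoot - 1 = T.lead - T.degRoot - 1 + 1 by omega]
    ring

lemma wt_empty (T : CayleyTree (n + 1)) (v : Fin (n + 1)) (hv : v ≠ 0) :
    wt (good_empty T v hv).tree = (X 1 + X 3) * wt T := by
  obtain ⟨h1, h2, h3⟩ := inv n T
  unfold wt
  rw [Good.impe, Good.lead, Good.deg, empty_impp T v hv,
    show T.impe + 1 - (T.impp + 1) = T.impe - T.impp by omega]
  ring

open Classical in
lemma wt_sib (T : CayleyTree (n + 1)) (c : Fin (n + 1)) (hc : T.ImproperEdge c) :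
    wt (good_sib T c hc).tree = (if IsMax T c then X 1 + 1 else X 1 + X 3) * wt T := by
  obtain ⟨h1, h2, h3⟩ := inv n T
  unfold wt
  rw [Good.impe, Good.lead, Good.deg]
  split_ifs with h
  · rw [sib_impp_max T c hc h, show T.impe + 1 - T.impp = T.impe - T.impp + 1 by omega]
    ring
  · rw [sib_impp_not_max T c hc h, show T.impe + 1 - (T.impp + 1) = T.impe - T.impp by omega]
    ring

lemma sum_wt (hn : 1 ≤ n) : ∑ T' : CayleyTree (n + 2), wt T' = ∑ T : CayleyTree (n + 1),
    (X 0 + (n : MvPolynomial (Fin 4) ℚ) * X 2 + (n : MvPolynomial (Fin 4) ℚ) * (X 1 + X 3)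
      + ((T.impp : MvPolynomial (Fin 4) ℚ) * (X 1 + 1)
        + ((T.impe - T.impp : ℕ) : MvPolynomial (Fin 4) ℚ) * (X 1 + X 3))) * wt T := by
  classical
  rw [sum_trees]
  refine Finset.sum_congr rfl (fun T _ => ?_)
  have e1 : ∑ q, wt (leafT T q) = (X 0 + (n : MvPolynomial (Fin 4) ℚ) * X 2) * wt T := by
    rw [Finset.sum_congr rfl (fun q _ => wt_leaf hn T q), ← Finset.sum_mul, Fin.sum_univ_succ]
    simp [Fin.succ_ne_zero]
  have e2 : ∑ v : {v : Fin (n + 1) // v ≠ 0}, wt (good_empty T v.1 v.2).tree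
      = (n : MvPolynomial (Fin 4) ℚ) * (X 1 + X 3) * wt T := by
    rw [Finset.sum_congr rfl (fun v _ => wt_empty T v.1 v.2), Finset.sum_const, Finset.card_univ, Fintype.card_subtype_compl]
    simp [mul_assoc]
  have e3 : ∑ c : {c : Fin (n + 1) // T.ImproperEdge c}, wt (good_sib T c.1 c.2).tree
      = ((T.impp : MvPolynomial (Fin 4) ℚ) * (X 1 + 1)
        + ((T.impe - T.impp : ℕ) : MvPolynomial (Fin 4) ℚ) * (X 1 + X 3)) * wt T := by
    rw [Finset.sum_congr rfl (fun c _ => wt_sib T c.1 c.2), ← Finset.sum_mul]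
    congr 1
    rw [Finset.sum_ite, Finset.sum_const, Finset.sum_const, nsmul_eq_mul, nsmul_eq_mul]
    have a1 : (Finset.univ.filter
        (fun c : {c : Fin (n + 1) // T.ImproperEdge c} => IsMax T c.1)).card = T.impp := by
      rw [← card_max, ← Fintype.card_subtype, ← Nat.card_eq_fintype_card, ← Nat.card_coe_set_eq]
      exact Nat.card_congr (Equiv.subtypeSubtypeEquivSubtypeInter _ _)
    have a2 := Finset.card_filter_add_card_filter_not (s := Finset.univ)
        (fun c : {c : Fin (n + 1) // T.ImproperEdge c} => IsMax T c.1)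
    have a3 : (Finset.univ : Finset {c : Fin (n + 1) // T.ImproperEdge c}).card = T.impe := by
      rw [Finset.card_univ, ← Nat.card_eq_fintype_card]
      exact Nat.card_coe_set_eq _
    rw [a1, a3] at a2
    rw [a1]
    congr 3
    omega
  rw [e1, e2, e3]
  ring

lemma pderiv_wt (T : CayleyTree (n + 1)) :
    (X 1 + X 3) * ((X 1 + 1) * pderiv 1 (wt T)) = ((T.impp : MvPolynomial (Fin 4) ℚ) * (X 1 + 1)
        + ((T.impe - T.impp : ℕ) : MvPolynomial (Fin 4) ℚ) * (X 1 + X 3)) * wt T := by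
  unfold wt
  generalize T.impe - T.impp = a
  generalize T.impp = b
  generalize T.degRoot - 1 = d
  generalize T.lead - T.degRoot - 1 = e
  have key : ∀ (u : MvPolynomial (Fin 4) ℚ) (k : ℕ), u * ((k : MvPolynomial (Fin 4) ℚ) * u ^ (k - 1))
      = (k : MvPolynomial (Fin 4) ℚ) * u ^ k := by
    intro u k
    cases k with
    | zero => simp
    | succ k => simp [pow_succ]; ring
  have d1 : pderiv 1 (((X 1 : MvPolynomial (Fin 4) ℚ) + 1) ^ a) = (a : MvPolynomial (Fin 4) ℚ) * (X 1 + 1) ^ (a - 1) := by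
    rw [Derivation.leibniz_pow]
    simp [pderiv_X]
  have d3 : pderiv 1 (((X 1 : MvPolynomial (Fin 4) ℚ) + X 3) ^ b) = (b : MvPolynomial (Fin 4) ℚ) * (X 1 + X 3) ^ (b - 1) := by
    rw [Derivation.leibniz_pow]
    simp [pderiv_X]
  have d0 : pderiv 1 ((X 0 : MvPolynomial (Fin 4) ℚ) ^ d) = 0 := by
    rw [Derivation.leibniz_pow]
    simp [pderiv_X]
  have d2 : pderiv 1 ((X 2 : MvPolynomial (Fin 4) ℚ) ^ e) = 0 := by
    rw [Derivation.leibniz_pow]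
    simp [pderiv_X]
  simp only [pderiv_mul, d0, d1, d2, d3]
  linear_combination (X 1 + X 3) ^ (b + 1) * X 0 ^ d * X 2 ^ e * key (X 1 + 1) a
    + (X 1 + 1) ^ (a + 1) * X 0 ^ d * X 2 ^ e * key (X 1 + X 3) b

/-- the substitution -/
def sb : Fin 4 → MvPolynomial (Fin 4) ℚ :=
  fun i : Fin 4 => if i = 1 then X 1 + 1 else if i = 3 then X 3 - 1 else X i

lemma pderiv_sb (P : MvPolynomial (Fin 4) ℚ) :
    pderiv 1 (bind₁ sb P) = bind₁ sb (pderiv 1 P) := by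
  induction P using MvPolynomial.induction_on with
  | C a => simp
  | add p q hp hq => simp [hp, hq]
  | mul_X p i hp =>
    rw [map_mul, pderiv_mul, pderiv_mul, hp, map_add, map_mul, map_mul, bind₁_X_right]
    congr 2
    fin_cases i <;> simp [sb, pderiv_X]

lemma Rpoly_rec (n : ℕ) : Rpoly (n + 2) =
    (X 0 + ((n + 1 : ℕ) : MvPolynomial (Fin 4) ℚ) * X 2
      + ((n + 1 : ℕ) : MvPolynomial (Fin 4) ℚ) * (X 1 + X 3)) * Rpoly (n + 1)
        + (X 1 + X 3) * ((X 1 + 1) * pderiv 1 (Rpoly (n + 1))) := by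
  have hR : ∀ m, Rpoly m = bind₁ sb (Qpoly m) := fun _ => rfl
  have s0 : sb 0 = X 0 := by simp [sb]
  have s1 : sb 1 = X 1 + 1 := by simp [sb]
  have s2 : sb 2 = X 2 := by simp [sb]
  have s3 : sb 3 = X 3 - 1 := by simp [sb]
  rw [hR, hR, pderiv_sb, Qpoly]
  simp only [map_add, map_mul, bind₁_X_right, s0, s1, s2, s3, map_one, Nat.cast_add,
    Nat.cast_one, map_natCast]
  ring

lemma sum_two : ∑ T : CayleyTree 2, wt T = 1 := by
  classical
  let T₀ : CayleyTree 1 := mkT id ⟨rfl, fun v => ⟨0, fin1 _ _⟩⟩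
  have hu : ∀ T : CayleyTree 1, T = T₀ := fun T =>
    Subtype.ext (funext fun _ => fin1 _ _)
  have h2 : ∀ T : CayleyTree 2, T = leafT T₀ 0 := by
    intro T'
    obtain ⟨⟨T, q | v | c⟩, rfl⟩ := F_surj T'
    · obtain rfl := hu T
      obtain rfl : q = 0 := fin1 _ _
      rfl
    · exact absurd (fin1 _ _) v.2
    · exact absurd (fin1 _ _) (good_sib T c.1 c.2).ne
  rw [Fintype.sum_eq_single (leafT T₀ 0) (fun T hT => absurd (h2 T) hT)]
  obtain ⟨h1, h2, h3, h4⟩ := stats_one T₀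
  unfold wt
  rw [leaf_impe, leaf_impp, leaf_lead, leaf_deg, h1, h2, h3, h4]
  simp

theorem main (n : ℕ) : Rpoly (n + 1) = ∑ T : CayleyTree (n + 2), wt T := by
  induction n with
  | zero =>
    rw [sum_two]
    simp [Rpoly, Qpoly]
  | succ n ih =>
    rw [Rpoly_rec, ih, sum_wt (n := n + 1) (by omega), map_sum]
    simp only [Finset.mul_sum]
    rw [← Finset.sum_add_distrib]
    refine Finset.sum_congr rfl (fun T _ => ?_)
    rw [pderiv_wt]
    ring

end final

end CTaux

/-- For every `n ≥ 1`,
`R_n(x,y,z,t) = Σ_{T ∈ C_{n+1}} (y+1)^{impe T - impp T} (y+t)^{impp T} x^{deg_T(1)-1}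
  z^{lead T - deg_T(1) - 1}`. -/
theorem Rpoly_eq_sum_cayleyTree (n : ℕ) (hn : 1 ≤ n) :
    Rpoly n = ∑ T : CayleyTree (n + 1),
      ((X 1 : MvPolynomial (Fin 4) ℚ) + 1) ^ (T.impe - T.impp) * (X 1 + X 3) ^ T.impp
        * X 0 ^ (T.degRoot - 1) * X 2 ^ (T.lead - T.degRoot - 1) := by
  obtain ⟨m, rfl⟩ : ∃ m, n = m + 1 := ⟨n - 1, by omega⟩
  exact CTaux.main m

end
end
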